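/- Let G be a finite non-solvable group such that the number i₂(G) of elements of G of order 2 satisfies i₂(G) ≤ (10/99)·|G|. Then o(G) > 34479/10000. -/

import Mathlib

/-- The average element order `o(G) = ψ(G)/|G|` of a finite group `G`,
where `ψ(G) = ∑_{x ∈ G} |x|` is the sum of the orders of all elements of `G`. -/
noncomputable def avgOrder (G : Type*) [Group G] [Fintype G] : ℚ :=
  (∑ x : G, (orderOf x : ℚ)) / (Fintype.card G : ℚ)

/-- `i₂(G)`: the number of elements of order exactly 2 in `G`. -/
noncomputable def numOrderTwo (G : Type*) [Group G] [Fintype G] : ℕ :=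
  (Finset.univ.filter fun g : G => orderOf g = 2).card


namespace FI

open Subgroup

/-- 3-elements -/
def P3 {G : Type*} [Group G] (y : G) : Prop := ∃ k : ℕ, y ^ 3 ^ k = 1

section alg
variable {G : Type*} [Group G]

theorem comm3 {a b : G} (hb : b ^ 3 = 1) (h1 : (a * b) ^ 3 = 1) (h2 : (a * b⁻¹) ^ 3 = 1) :
    a * (b * a * b⁻¹) * (b⁻¹ * a * b) = 1 ∧
    Commute a (b * a * b⁻¹) ∧ Commute a (b⁻¹ * a * b) ∧
      Commute (b * a * b⁻¹) (b⁻¹ * a * b) := by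
  have hbb : b⁻¹ = b * b := by
    rw [inv_eq_iff_mul_eq_one]; rw [pow_three] at hb; exact hb
  have e1 : a * (b * a * b⁻¹) * (b⁻¹ * a * b) = 1 := by
    calc a * (b * a * b⁻¹) * (b⁻¹ * a * b) = a * b * a * (b⁻¹ * b⁻¹) * a * b := by group
      _ = a * b * a * b * a * b := by
        have : b⁻¹ * b⁻¹ = b := by rw [hbb]; rw [pow_three] at hb; rw [mul_assoc, hb, mul_one]
        rw [this]
      _ = (a * b) ^ 3 := by rw [pow_three]; group
      _ = 1 := h1
  have e2 : a * (b⁻¹ * a * b) * (b * a * b⁻¹) = 1 := by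
    calc a * (b⁻¹ * a * b) * (b * a * b⁻¹) = a * b⁻¹ * a * (b * b) * a * b⁻¹ := by group
      _ = a * b⁻¹ * a * b⁻¹ * a * b⁻¹ := by rw [← hbb]
      _ = (a * b⁻¹) ^ 3 := by rw [pow_three]; group
      _ = 1 := h2
  generalize b * a * b⁻¹ = A at *
  generalize b⁻¹ * a * b = B at *
  have e3 : A * B = B * A := by
    rw [mul_assoc] at e1 e2
    rw [← inv_eq_of_mul_eq_one_right e1, ← inv_eq_of_mul_eq_one_right e2]
  have ha : a = (A * B)⁻¹ := by rw [mul_assoc] at e1; exact eq_inv_of_mul_eq_one_left e1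
  have hc : Commute A B := e3
  refine ⟨e1, ?_, ?_, hc⟩
  · rw [ha]; exact ((Commute.refl A).mul_left hc.symm).inv_left
  · rw [ha]; exact (hc.mul_left (Commute.refl B)).inv_left

theorem P3.mul {a b : G} (ha : P3 a) (hb : P3 b) (h : Commute a b) : P3 (a * b) := by
  obtain ⟨k, hk⟩ := ha
  obtain ⟨l, hl⟩ := hb
  refine ⟨k + l, ?_⟩
  rw [h.mul_pow, pow_add, pow_mul, hk, one_pow, mul_comm, pow_mul, hl, one_pow, one_mul]

theorem P3.of_pow3 {a : G} (h : a ^ 3 = 1) : P3 a := ⟨1, by simpa using h⟩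

theorem P3.conj {a : G} (h : P3 a) (b : G) : P3 (b * a * b⁻¹) := by
  obtain ⟨k, hk⟩ := h
  exact ⟨k, by rw [conj_pow, hk]; group⟩

theorem P3.inv {a : G} (h : P3 a) : P3 a⁻¹ := by
  obtain ⟨k, hk⟩ := h
  exact ⟨k, by rw [inv_pow, hk, inv_one]⟩

theorem isPGroup_iff {H : Subgroup G} : IsPGroup 3 H ↔ ∀ x ∈ H, P3 x := by
  constructor
  · intro h x hx
    obtain ⟨k, hk⟩ := h ⟨x, hx⟩
    exact ⟨k, by simpa using congrArg Subtype.val hk⟩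
  · rintro h ⟨x, hx⟩
    obtain ⟨k, hk⟩ := h x hx
    exact ⟨k, by ext; simpa using hk⟩

theorem isPGroup_closure_comm (s : Set G) (hc : ∀ a ∈ s, ∀ b ∈ s, Commute a b)
    (h3 : ∀ a ∈ s, P3 a) : IsPGroup 3 (closure s) := by
  have hcl : ∀ a ∈ closure s, ∀ b ∈ closure s, Commute a b := by
    intro a ha
    have h1 : ∀ b ∈ s, Commute a b := by
      intro b hb
      induction ha using closure_induction with
      | mem x hx => exact hc x hx b hb
      | one => exact Commute.one_left b
      | mul x y _ _ hx hy => exact hx.mul_left hy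
      | inv x _ hx => exact hx.inv_left
    intro b hb
    induction hb using closure_induction with
    | mem x hx => exact h1 x hx
    | one => exact Commute.one_right a
    | mul x y _ _ hx hy => exact hx.mul_right hy
    | inv x _ hx => exact hx.inv_right
  rw [isPGroup_iff]
  intro x hx
  induction hx using closure_induction with
  | mem x hx => exact h3 x hx
  | one => exact ⟨0, by simp⟩
  | mul x y hx hy h1 h2 => exact h1.mul h2 (hcl x hx y hy)
  | inv x _ hx => exact hx.inv

theorem isPGroup_zpowers {a : G} (h : P3 a) : IsPGroup 3 (zpowers a) := by
  rw [zpowers_eq_closure]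
  apply isPGroup_closure_comm
  · rintro a rfl b rfl; exact Commute.refl _
  · rintro a rfl; exact h

/-- line lemma -/
theorem line_lemma {a b : G} (ha : a ^ 3 = 1) (hb : b ^ 3 = 1) (h1 : (a * b) ^ 3 = 1)
    (h2 : (a * b⁻¹) ^ 3 = 1) : ∃ H : Subgroup G, IsPGroup 3 H ∧ a ∈ H ∧ b ∈ H := by
  obtain ⟨-, c1, c2, c3⟩ := comm3 hb h1 h2
  have hbb : b⁻¹ = b * b := by
    rw [inv_eq_iff_mul_eq_one]; rw [pow_three] at hb; exact hb
  set s : Set G := {a, b * a * b⁻¹, b⁻¹ * a * b} with hs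
  have hA : IsPGroup 3 (closure s) := by
    apply isPGroup_closure_comm
    · rintro x (rfl | rfl | rfl) y (rfl | rfl | rfl)
      all_goals first | exact Commute.refl _ | assumption | (apply Commute.symm; assumption)
    · rintro x (rfl | rfl | rfl)
      · exact P3.of_pow3 ha
      · exact (P3.of_pow3 ha).conj _
      · have := (P3.of_pow3 ha).conj b⁻¹
        rwa [inv_inv] at this
  have hn : zpowers b ≤ normalizer (closure s : Set G) := by
    rw [zpowers_le]
    have key : ∀ x ∈ closure s, b * x * b⁻¹ ∈ closure s := by
      intro x hx
      induction hx using closure_induction with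
      | mem x hx =>
        rcases hx with rfl | rfl | rfl
        · exact subset_closure (by simp [hs])
        · have : b * (b * a * b⁻¹) * b⁻¹ = b⁻¹ * a * b := by
            rw [hbb]
            calc b * (b * a * (b * b)) * (b * b) = b * b * a * b ^ 3 * b := by rw [pow_three]; group
              _ = _ := by rw [hb, mul_one]
          rw [this]
          exact subset_closure (by simp [hs])
        · have : b * (b⁻¹ * a * b) * b⁻¹ = a := by group
          rw [this]
          exact subset_closure (by simp [hs])
      | one => simp
      | mul x y _ _ hx hy =>
        have : b * (x * y) * b⁻¹ = (b * x * b⁻¹) * (b * y * b⁻¹) := by group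
        rw [this]; exact mul_mem hx hy
      | inv x _ hx =>
        have : b * x⁻¹ * b⁻¹ = (b * x * b⁻¹)⁻¹ := by group
        rw [this]; exact inv_mem hx
    rw [mem_normalizer_iff]
    intro x
    refine ⟨key x, fun h => ?_⟩
    have h3 := key _ (key _ h)
    have : b * (b * (b * x * b⁻¹) * b⁻¹) * b⁻¹ = b ^ 3 * x * (b ^ 3)⁻¹ := by rw [pow_three]; group
    rw [this, hb] at h3
    simpa using h3
  refine ⟨zpowers b ⊔ closure s, ?_, ?_, ?_⟩
  · exact IsPGroup.to_sup_of_normal_right' (isPGroup_zpowers (P3.of_pow3 hb)) hA hn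
  · exact mem_sup_right (subset_closure (by simp [hs]))
  · exact mem_sup_left (mem_zpowers b)

end alg
end FI


namespace FI

open Subgroup

section alg2
variable {G : Type*} [Group G]

theorem mermin_abs {φ ψ : MulAut G} (hc : ∀ x, φ (ψ x) = ψ (φ x)) {w : G}
    (h1 : w * φ w * φ (φ w) = 1) (h2 : w * ψ w * ψ (ψ w) = 1)
    (c1 : Commute w (φ w)) (c2 : Commute w (ψ w)) : Commute (φ w) (ψ w) := by
  have e1 : φ (φ w) = (w * φ w)⁻¹ := eq_inv_of_mul_eq_one_right h1
  have e2 : ψ (ψ w) = (w * ψ w)⁻¹ := eq_inv_of_mul_eq_one_right h2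
  have e3 : φ (φ (ψ (ψ w))) = ψ (ψ (φ (φ w))) := by simp only [hc]
  rw [e1, e2] at e3
  have c3 : Commute (ψ w) (ψ (φ w)) := c1.map ψ
  have c4 : Commute (φ w) (ψ (φ w)) := by rw [← hc]; exact c2.map φ
  have e4 : φ (φ (ψ w)) = (ψ w * ψ (φ w))⁻¹ := by
    rw [hc, hc, e1]; simp
  have e5 : ψ (ψ (φ w)) = (φ w * ψ (φ w))⁻¹ := by
    rw [← hc, ← hc, e2]; simp [hc]
  simp only [map_inv, map_mul, e1, e2, e4, e5] at e3
  generalize φ w = c at *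
  generalize ψ w = b at *
  generalize ψ c = d at *
  simp only [mul_inv_rev, inv_inv] at e3
  -- b * d * (w * c) = c * d * (w * b)
  have : d * (b * c) * w = d * (c * b) * w := by
    calc d * (b * c) * w = (d * b) * (c * w) := by group
      _ = (b * d) * (w * c) := by rw [c3.eq, c1.eq]
      _ = (c * d) * (w * b) := by simpa [mul_assoc] using e3
      _ = (d * c) * (b * w) := by rw [c4.eq, c2.eq]
      _ = _ := by group
  have h := mul_right_cancel this
  exact (mul_left_cancel h).symm

theorem sq_conj {b : G} (hb : b ^ 3 = 1) (a : G) :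
    b * (b * a * b⁻¹) * b⁻¹ = b⁻¹ * a * b := by
  have hbb : b⁻¹ = b * b := by
    rw [inv_eq_iff_mul_eq_one]; rw [pow_three] at hb; exact hb
  rw [hbb]
  calc b * (b * a * (b * b)) * (b * b) = b * b * a * b ^ 3 * b := by rw [pow_three]; group
    _ = _ := by rw [hb, mul_one]

theorem mermin1 {e f w : G} (hef : Commute e f) (he : e ^ 3 = 1) (hf : f ^ 3 = 1)
    (h1 : (w * e) ^ 3 = 1) (h2 : (w * e⁻¹) ^ 3 = 1)
    (h3 : (w * f) ^ 3 = 1) (h4 : (w * f⁻¹) ^ 3 = 1) :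
    Commute (e * w * e⁻¹) (f * w * f⁻¹) := by
  obtain ⟨a1, a2, -, -⟩ := comm3 he h1 h2
  obtain ⟨b1, b2, -, -⟩ := comm3 hf h3 h4
  have := @mermin_abs G _ (MulAut.conj e) (MulAut.conj f) (by
      intro x
      simp only [MulAut.conj_apply]
      calc e * (f * x * f⁻¹) * e⁻¹ = (e * f) * x * (e * f)⁻¹ := by group
        _ = (f * e) * x * (f * e)⁻¹ := by rw [hef.eq]
        _ = _ := by group) w
    (by simp only [MulAut.conj_apply]; rw [sq_conj he]; exact a1)
    (by simp only [MulAut.conj_apply]; rw [sq_conj hf]; exact b1)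
    (by simpa using a2) (by simpa using b2)
  simpa using this

theorem zpow3_cases {e : G} (he : e ^ 3 = 1) (i : ℤ) : e ^ i = 1 ∨ e ^ i = e ∨ e ^ i = e⁻¹ := by
  have h3 : e ^ (3 : ℤ) = 1 := by exact_mod_cast he
  have : e ^ i = e ^ (i % 3) := by
    conv_lhs => rw [← Int.emod_add_mul_ediv i 3, zpow_add, zpow_mul, h3, one_zpow, mul_one]
  rw [this]
  have h : i % 3 = 0 ∨ i % 3 = 1 ∨ i % 3 = 2 := by omega
  rcases h with h | h | h <;> rw [h]
  · left; simp
  · right; left; simp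
  · right; right
    rw [eq_comm, inv_eq_iff_mul_eq_one]
    rw [pow_three] at he
    rw [zpow_two]; exact he

theorem mem_closure_pair' {e f : G} (hef : Commute e f) {p : G} (hp : p ∈ closure {e, f}) :
    ∃ i j : ℤ, p = e ^ i * f ^ j := by
  induction hp using closure_induction with
  | mem x hx =>
    rcases hx with rfl | rfl
    · exact ⟨1, 0, by simp⟩
    · exact ⟨0, 1, by simp⟩
  | one => exact ⟨0, 0, by simp⟩
  | mul x y _ _ hx hy =>
    obtain ⟨i, j, rfl⟩ := hx
    obtain ⟨k, l, rfl⟩ := hy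
    refine ⟨i + k, j + l, ?_⟩
    rw [zpow_add, zpow_add]
    have := (hef.zpow_zpow k j).eq
    calc e ^ i * f ^ j * (e ^ k * f ^ l) = e ^ i * (f ^ j * e ^ k) * f ^ l := by group
      _ = e ^ i * (e ^ k * f ^ j) * f ^ l := by rw [this]
      _ = _ := by group
  | inv x _ hx =>
    obtain ⟨i, j, rfl⟩ := hx
    refine ⟨-i, -j, ?_⟩
    rw [zpow_neg, zpow_neg, mul_inv_rev]
    exact (hef.zpow_zpow i j).inv_inv.eq.symm

theorem commute_conj_iff (p a b : G) : Commute (p * a * p⁻¹) (p * b * p⁻¹) ↔ Commute a b := by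
  rw [← MulAut.conj_apply, ← MulAut.conj_apply]
  constructor
  · intro h
    have := h.map (MulAut.conj p).symm
    simpa [mul_assoc] using this
  · intro h; exact h.map (MulAut.conj p)

theorem mermin2 {e f w : G} (hef : Commute e f) (he : e ^ 3 = 1) (hf : f ^ 3 = 1)
    (h1 : (w * e) ^ 3 = 1) (h2 : (w * e⁻¹) ^ 3 = 1)
    (h3 : (w * f) ^ 3 = 1) (h4 : (w * f⁻¹) ^ 3 = 1) :
    ∀ p ∈ closure {e, f}, Commute w (p * w * p⁻¹) := by
  have he' : e⁻¹ ^ 3 = 1 := by rw [inv_pow, he, inv_one]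
  have hf' : f⁻¹ ^ 3 = 1 := by rw [inv_pow, hf, inv_one]
  -- general: Commute w ((e⁻¹ f) w (e⁻¹ f)⁻¹)
  have gen : ∀ {e f : G}, Commute (e * w * e⁻¹) (f * w * f⁻¹) →
      Commute w ((e⁻¹ * f) * w * (e⁻¹ * f)⁻¹) := by
    intro e f h
    rw [← commute_conj_iff e]
    convert h using 1
    group
  intro p hp
  obtain ⟨i, j, rfl⟩ := mem_closure_pair' hef hp
  obtain ⟨-, a2, a3, -⟩ := comm3 he h1 h2
  obtain ⟨-, b2, b3, -⟩ := comm3 hf h3 h4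
  have i1 : (w * e⁻¹⁻¹) ^ 3 = 1 := by rwa [inv_inv]
  have i3 : (w * f⁻¹⁻¹) ^ 3 = 1 := by rwa [inv_inv]
  rcases zpow3_cases he i with h | h | h <;> rcases zpow3_cases hf j with h' | h' | h' <;>
    rw [h, h']
  · simp
  · simpa using b2
  · simpa using b3
  · simpa using a2
  · have := gen (mermin1 (hef.inv_left) he' hf h2 i1 h3 h4)
    simpa using this
  · have := gen (mermin1 (hef.inv_left.inv_right) he' hf' h2 i1 h4 i3)
    simpa using this
  · simpa using a3
  · exact gen (mermin1 hef he hf h1 h2 h3 h4)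
  · exact gen (mermin1 hef.inv_right he hf' h1 h2 h4 i3)

theorem exists_pgroup_conj {E : Subgroup G} (hE : IsPGroup 3 E) {u : G} (hu : P3 u)
    (hc : ∀ p ∈ E, Commute u (p * u * p⁻¹)) :
    ∃ H : Subgroup G, IsPGroup 3 H ∧ E ≤ H ∧ u ∈ H := by
  set s : Set G := {x | ∃ p ∈ E, x = p * u * p⁻¹} with hs
  have hA : IsPGroup 3 (closure s) := by
    apply isPGroup_closure_comm
    · rintro x ⟨p, hp, rfl⟩ y ⟨q, hq, rfl⟩
      rw [← commute_conj_iff p⁻¹]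
      convert hc (p⁻¹ * q) (mul_mem (inv_mem hp) hq) using 1
      · group
      · group
    · rintro x ⟨p, hp, rfl⟩
      exact hu.conj p
  have hn : E ≤ normalizer (closure s : Set G) := by
    have key : ∀ b ∈ E, ∀ x ∈ closure s, b * x * b⁻¹ ∈ closure s := by
      intro b hb x hx
      induction hx using closure_induction with
      | mem x hx =>
        obtain ⟨p, hp, rfl⟩ := hx
        refine subset_closure ⟨b * p, mul_mem hb hp, by group⟩
      | one => simp
      | mul x y _ _ hx hy =>
        have : b * (x * y) * b⁻¹ = (b * x * b⁻¹) * (b * y * b⁻¹) := by group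
        rw [this]; exact mul_mem hx hy
      | inv x _ hx =>
        have : b * x⁻¹ * b⁻¹ = (b * x * b⁻¹)⁻¹ := by group
        rw [this]; exact inv_mem hx
    intro b hb
    rw [mem_normalizer_iff]
    intro x
    refine ⟨key b hb x, fun h => ?_⟩
    have := key _ (inv_mem hb) _ h
    have h2 : b⁻¹ * (b * x * b⁻¹) * b⁻¹⁻¹ = x := by group
    rwa [h2] at this
  refine ⟨E ⊔ closure s, IsPGroup.to_sup_of_normal_right' hE hA hn, le_sup_left, ?_⟩
  exact mem_sup_right (subset_closure ⟨1, one_mem _, by simp⟩)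

theorem mermin3 {e f w : G} (hef : Commute e f) (he : e ^ 3 = 1) (hf : f ^ 3 = 1)
    (h1 : (w * e) ^ 3 = 1) (h2 : (w * e⁻¹) ^ 3 = 1)
    (h3 : (w * f) ^ 3 = 1) (h4 : (w * f⁻¹) ^ 3 = 1) :
    ∃ c d : G, w ^ 3 = c * d ∧ Commute c d ∧ Commute c (e * f⁻¹) ∧ Commute d (e * f) := by
  have M := mermin2 hef he hf h1 h2 h3 h4
  have hcc : ∀ p ∈ closure {e, f}, ∀ q ∈ closure {e, f},
      Commute (p * w * p⁻¹) (q * w * q⁻¹) := by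
    intro p hp q hq
    rw [← commute_conj_iff p⁻¹]
    convert M (p⁻¹ * q) (mul_mem (inv_mem hp) hq) using 1 <;> group
  have me : e ∈ closure {e, f} := subset_closure (by simp)
  have mf : f ∈ closure {e, f} := subset_closure (by simp)
  have norm : ∀ b ∈ closure {e, f}, b ^ 3 = 1 →
      Commute (w * (b * w * b⁻¹) * (b⁻¹ * w * b)) b := by
    intro b hb hb3
    have q1 : Commute w (b * w * b⁻¹) := M b hb
    have q2 : Commute w (b⁻¹ * w * b) := by simpa using M b⁻¹ (inv_mem hb)
    have q3 : Commute (b * w * b⁻¹) (b⁻¹ * w * b) := by simpa using hcc b hb b⁻¹ (inv_mem hb)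
    have : b * (w * (b * w * b⁻¹) * (b⁻¹ * w * b)) * b⁻¹ =
        w * (b * w * b⁻¹) * (b⁻¹ * w * b) := by
      calc _ = (b * w * b⁻¹) * (b * (b * w * b⁻¹) * b⁻¹) * w := by group
        _ = (b * w * b⁻¹) * (b⁻¹ * w * b) * w := by rw [sq_conj hb3]
        _ = w * ((b * w * b⁻¹) * (b⁻¹ * w * b)) := ((q1.mul_right q2).eq).symm
        _ = _ := by group
    have h5 : b * (w * (b * w * b⁻¹) * (b⁻¹ * w * b)) =
        (w * (b * w * b⁻¹) * (b⁻¹ * w * b)) * b := by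
      rw [mul_inv_eq_iff_eq_mul] at this; exact this
    exact h5.symm
  have n1 := norm (e * f⁻¹) (mul_mem me (inv_mem mf)) (by
    rw [hef.inv_right.mul_pow, he, inv_pow, hf]; simp)
  have n2 := norm (e * f) (mul_mem me mf) (by
    rw [hef.mul_pow, he, hf]; simp)
  refine ⟨_, _, ?_, ?_, n1, n2⟩
  · obtain ⟨a1, -, -, -⟩ := comm3 hf h3 h4
    -- lines in direction f through e and e⁻¹
    have k1 : (e * f) * w * (e * f)⁻¹ * ((e * f⁻¹) * w * (e * f⁻¹)⁻¹) = (e * w * e⁻¹)⁻¹ := by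
      apply eq_inv_of_mul_eq_one_right
      calc _ = e * (w * (f * w * f⁻¹) * (f⁻¹ * w * f)) * e⁻¹ := by group
        _ = 1 := by rw [a1]; group
    have k2 : (e⁻¹ * f) * w * (e⁻¹ * f)⁻¹ * ((e⁻¹ * f⁻¹) * w * (e⁻¹ * f⁻¹)⁻¹)
        = (e⁻¹ * w * e)⁻¹ := by
      apply eq_inv_of_mul_eq_one_right
      calc _ = e⁻¹ * (w * (f * w * f⁻¹) * (f⁻¹ * w * f)) * e := by group
        _ = 1 := by rw [a1]; group
    have k3 : (e * w * e⁻¹)⁻¹ * (e⁻¹ * w * e)⁻¹ = w := by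
      obtain ⟨b1, _, _, b4⟩ := comm3 he h1 h2
      rw [mul_assoc] at b1
      rw [← mul_inv_rev, ← b4.eq]
      exact (eq_inv_of_mul_eq_one_left b1).symm
    have j1 : (e * f⁻¹)⁻¹ = e⁻¹ * f := by rw [mul_inv_rev, inv_inv]; exact hef.inv_left.eq.symm
    have j2 : (e * f)⁻¹ = e⁻¹ * f⁻¹ := by rw [mul_inv_rev]; exact hef.inv_inv.eq.symm
    have x1 : (e * f⁻¹)⁻¹ * w * (e * f⁻¹) = (e⁻¹ * f) * w * (e⁻¹ * f)⁻¹ := by rw [← j1]; group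
    have x2 : (e * f)⁻¹ * w * (e * f) = (e⁻¹ * f⁻¹) * w * (e⁻¹ * f⁻¹)⁻¹ := by rw [← j2]; group
    rw [x1, x2]
    have g1 : Commute w ((e⁻¹ * f) * w * (e⁻¹ * f)⁻¹) := M _ (mul_mem (inv_mem me) mf)
    have g2 : Commute w ((e * f⁻¹) * w * (e * f⁻¹)⁻¹) := M _ (mul_mem me (inv_mem mf))
    have g3 := hcc (e * f⁻¹) (mul_mem me (inv_mem mf)) (e⁻¹ * f) (mul_mem (inv_mem me) mf)
    have g4 := hcc (e * f⁻¹) (mul_mem me (inv_mem mf)) (e * f) (mul_mem me mf)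
    have g5 := hcc (e⁻¹ * f) (mul_mem (inv_mem me) mf) (e * f) (mul_mem me mf)
    generalize (e * f⁻¹) * w * (e * f⁻¹)⁻¹ = A at *
    generalize (e⁻¹ * f) * w * (e⁻¹ * f)⁻¹ = B at *
    generalize (e * f) * w * (e * f)⁻¹ = C at *
    generalize (e⁻¹ * f⁻¹) * w * (e⁻¹ * f⁻¹)⁻¹ = D at *
    symm
    calc w * A * B * (w * C * D) = w * (A * (B * w)) * C * D := by group
      _ = w * (A * (w * B)) * C * D := by rw [g1.eq]
      _ = w * (A * w) * (B * C) * D := by group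
      _ = w * (w * A) * (C * B) * D := by rw [g2.eq, g5.eq]
      _ = w * w * (A * C) * (B * D) := by group
      _ = w * w * (C * A) * (B * D) := by rw [g4.eq]
      _ = w * w * ((e * w * e⁻¹)⁻¹ * (e⁻¹ * w * e)⁻¹) := by rw [k1, k2]; group
      _ = w ^ 3 := by rw [k3, pow_three]; group
  · have c0 : ∀ p ∈ closure {e, f}, ∀ q ∈ closure {e, f},
      Commute (p * w * p⁻¹) (w * (q * w * q⁻¹) * (q⁻¹ * w * q)) := by
      intro p hp q hq
      refine Commute.mul_right (Commute.mul_right (M p hp).symm (hcc p hp q hq)) ?_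
      simpa using hcc p hp q⁻¹ (inv_mem hq)
    have b1 := c0 1 (one_mem _) (e * f) (mul_mem me mf)
    have b2 := c0 (e * f⁻¹) (mul_mem me (inv_mem mf)) (e * f) (mul_mem me mf)
    have b3 := c0 (e * f⁻¹)⁻¹ (inv_mem (mul_mem me (inv_mem mf))) (e * f) (mul_mem me mf)
    refine Commute.mul_left (Commute.mul_left (by simpa using b1) b2) (by simpa using b3)

end alg2
end FI


namespace FI

open Subgroup

section defs
variable {G : Type*} [Group G]

/-- `y` lies in `P` and in no other Sylow 3-subgroup -/
def Unq (P : Sylow 3 G) (y : G) : Prop := y ∈ P ∧ ∀ Q : Sylow 3 G, y ∈ Q → Q = P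

/-- the centralizer of `y` is a 3-group -/
def C3 (y : G) : Prop := IsPGroup 3 (centralizer {y} : Subgroup G)

theorem C3.p3 {y x : G} (h : C3 y) (hx : Commute x y) : P3 x :=
  isPGroup_iff.mp h x (mem_centralizer_singleton_iff.mpr hx.eq)

theorem C3.inv {y : G} (h : C3 y) : C3 y⁻¹ := by
  unfold C3 at *
  rw [isPGroup_iff] at *
  intro x hx
  rw [mem_centralizer_singleton_iff] at hx
  have hx' : Commute x y⁻¹ := hx
  exact h x (mem_centralizer_singleton_iff.mpr (by simpa using hx'.inv_right.eq))

theorem Unq.inv {P : Sylow 3 G} {y : G} (h : Unq P y) : Unq P y⁻¹ :=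
  ⟨inv_mem h.1, fun Q hQ => h.2 Q (by simpa using inv_mem hQ)⟩

theorem Unq.le {P : Sylow 3 G} {y : G} (h : Unq P y) {H : Subgroup G} (hH : IsPGroup 3 H)
    (hy : y ∈ H) : H ≤ P := by
  obtain ⟨Q, hQ⟩ := hH.exists_le_sylow
  rw [← h.2 Q (hQ hy)]; exact hQ

theorem smul_eq_of_mem {P : Sylow 3 G} {g : G} (h : g ∈ P) : g • P = P := by
  rw [Sylow.smul_eq_iff_mem_normalizer]
  exact le_normalizer h

/-- the conjugate Sylow -/
theorem mem_smul_iff {P : Sylow 3 G} {g x : G} : x ∈ g • P ↔ g⁻¹ * x * g ∈ P := by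
  rw [← SetLike.mem_coe, Sylow.coe_smul, Set.mem_smul_set_iff_inv_smul_mem]
  simp [MulAut.smul_def, ← map_inv]

theorem fact1 {P : Sylow 3 G} {h u : G} (hu : Unq P u) (hu3 : u ^ 3 = 1) (h1 : h ^ 3 = 1)
    (h2 : (h * u) ^ 3 = 1) (h3 : (h * u⁻¹) ^ 3 = 1) : h ∈ P := by
  obtain ⟨H, hH, a, b⟩ := line_lemma h1 hu3 h2 h3
  exact hu.le hH b a

theorem isPGroup_pair {e f : G} (hef : Commute e f) (he : e ^ 3 = 1) (hf : f ^ 3 = 1) :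
    IsPGroup 3 (closure {e, f} : Subgroup G) := by
  apply isPGroup_closure_comm
  · rintro x (rfl | rfl) y (rfl | rfl)
    all_goals first | exact Commute.refl _ | assumption | (apply Commute.symm; assumption)
  · rintro x (rfl | rfl) <;> apply P3.of_pow3 <;> assumption

theorem P3.of_pow {a : G} (h : P3 (a ^ 3)) : P3 a := by
  obtain ⟨k, hk⟩ := h
  exact ⟨k + 1, by rw [pow_succ', pow_mul]; exact hk⟩

theorem fact2 {P : Sylow 3 G} {e f w : G} (hef : Commute e f) (he : e ^ 3 = 1) (hf : f ^ 3 = 1)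
    (h1 : (w * e) ^ 3 = 1) (h2 : (w * e⁻¹) ^ 3 = 1)
    (h3 : (w * f) ^ 3 = 1) (h4 : (w * f⁻¹) ^ 3 = 1)
    (c1 : C3 (e * f⁻¹)) (c2 : C3 (e * f)) (hu : Unq P f) : w ∈ P := by
  obtain ⟨c, d, e1, e2, e3, e4⟩ := mermin3 hef he hf h1 h2 h3 h4
  have hw : P3 w := by
    apply P3.of_pow
    rw [e1]
    exact (c1.p3 e3).mul (c2.p3 e4) e2
  obtain ⟨H, hH, a, b⟩ := exists_pgroup_conj (isPGroup_pair hef he hf) hw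
    (mermin2 hef he hf h1 h2 h3 h4)
  exact hu.le hH (a (subset_closure (by simp))) b

/-- splitting off the 3-part -/
theorem split3 [Finite G] (w : G) (K : ℕ) : ∃ a b : ℤ, w = w ^ a * w ^ b ∧ P3 (w ^ a) ∧
    ∃ c : ℤ, b = 3 ^ K * c := by
  obtain ⟨k, m, hm, hk⟩ := Nat.exists_eq_pow_mul_and_not_dvd (orderOf_pos w).ne' 3 (by norm_num)
  have hcop : IsCoprime (m : ℤ) (3 ^ K : ℤ) := by
    apply IsCoprime.pow_right
    rw [Int.isCoprime_iff_gcd_eq_one]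
    have : Nat.Coprime m 3 := ((Nat.Prime.coprime_iff_not_dvd Nat.prime_three).mpr hm).symm
    exact_mod_cast this
  obtain ⟨u, v, huv⟩ := hcop
  refine ⟨u * m, v * 3 ^ K, ?_, ⟨k, ?_⟩, v, by ring⟩
  · rw [← zpow_add, huv, zpow_one]
  · rw [← zpow_natCast, ← zpow_mul]
    have : u * (m : ℤ) * ((3 ^ k : ℕ) : ℤ) = (orderOf w : ℤ) * u := by
      rw [hk]; push_cast; ring
    rw [this, zpow_mul, zpow_natCast, pow_orderOf_eq_one, one_zpow]

theorem fact3 [Finite G] {P : Sylow 3 G} {e f w : G} (hef : Commute e f) (he : e ^ 3 = 1)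
    (hf : f ^ 3 = 1)
    (h1 : (w * e) ^ 3 = 1) (h2 : (w * e⁻¹) ^ 3 = 1)
    (h3 : (w * f) ^ 3 = 1) (h4 : (w * f⁻¹) ^ 3 = 1)
    (c1 : ∀ p ∈ P, Commute p (e * f⁻¹)) (c2 : C3 (e * f)) (hu : Unq P f) :
    Commute w (e * f⁻¹) := by
  obtain ⟨c, d, e1, e2, e3, e4⟩ := mermin3 hef he hf h1 h2 h3 h4
  obtain ⟨k, hk⟩ := c2.p3 e4
  have hw : Commute (w ^ 3 ^ (k + 1)) (e * f⁻¹) := by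
    rw [pow_succ', pow_mul, e1, e2.mul_pow, hk, mul_one]
    exact e3.pow_left _
  obtain ⟨a, b, hab, ha, t, ht⟩ := split3 w (k + 1)
  have hM := mermin2 hef he hf h1 h2 h3 h4
  obtain ⟨H, hH, s1, s2⟩ := exists_pgroup_conj (isPGroup_pair hef he hf) ha
    (fun p hp => by
      rw [← conj_zpow]
      exact (hM p hp).zpow_zpow a a)
  have hP : w ^ a ∈ P := hu.le hH (s1 (subset_closure (by simp))) s2
  rw [hab]
  refine Commute.mul_left (c1 _ hP) ?_
  rw [ht, zpow_mul]
  have := hw.zpow_left t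
  rw [← zpow_natCast] at this
  exact_mod_cast this

end defs
end FI


namespace FI

open Subgroup

section comb

def F123 (t : Fin 3 → Fin 3 → Bool) : Prop :=
  (∀ i j s, (t i j && t (i + 1) (j + s) && t (i - 1) (j - s)) = false) ∧
  (∀ i j s, (t i (j + 1) && t i (j - 1) && t (i + 1) (j + s) && t (i - 1) (j - s)) = false) ∧
  (∀ i j s s', s ≠ s' → (t (i + 1) (j + s) && t (i - 1) (j - s) && t (i + 1) (j + s') &&
    t (i - 1) (j - s')) = true → ∀ k, t (i + 1) k = true)

instance (t : Fin 3 → Fin 3 → Bool) : Decidable (F123 t) := by unfold F123; infer_instance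

def tcount (t : Fin 3 → Fin 3 → Bool) : ℕ := ∑ i, ∑ j, (t i j).toNat

def tlines (t : Fin 3 → Fin 3 → Bool) : ℕ := ∑ i, (t i 0 && t i 1 && t i 2).toNat

/-- transversal lines -/
def R1 (r0 r1 r2 u0 u1 u2 v0 v1 v2 : Bool) : Bool :=
  !(r0 && u0 && v0) &&
  !(r0 && u1 && v2) &&
  !(r0 && u2 && v1) &&
  !(r1 && u1 && v1) &&
  !(r1 && u2 && v0) &&
  !(r1 && u0 && v2) &&
  !(r2 && u2 && v2) &&
  !(r2 && u0 && v1) &&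
  !(r2 && u1 && v0)

/-- second family of conditions -/
def R2 (r0 r1 r2 u0 u1 u2 v0 v1 v2 : Bool) : Bool :=
  !(r1 && r2 && u0 && v0) &&
  !(r1 && r2 && u1 && v2) &&
  !(r1 && r2 && u2 && v1) &&
  !(r2 && r0 && u1 && v1) &&
  !(r2 && r0 && u2 && v0) &&
  !(r2 && r0 && u0 && v2) &&
  !(r0 && r1 && u2 && v2) &&
  !(r0 && r1 && u0 && v1) &&
  !(r0 && r1 && u1 && v0)

/-- third family of conditions -/
def R3 (r0 r1 r2 u0 u1 u2 v0 v1 v2 : Bool) : Bool :=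
  (!(u0 && v0 && u1 && v2) || u2) &&
  (!(u1 && v2 && u2 && v1) || u0) &&
  (!(u2 && v1 && u0 && v0) || u1) &&
  (!(u1 && v1 && u2 && v0) || u0) &&
  (!(u2 && v0 && u0 && v2) || u1) &&
  (!(u0 && v2 && u1 && v1) || u2) &&
  (!(u2 && v2 && u0 && v1) || u1) &&
  (!(u0 && v1 && u1 && v0) || u2) &&
  (!(u1 && v0 && u2 && v2) || u0)

theorem R_aux : ∀ a b c d e f g h i : Bool,
    (R1 a b c d e f g h i && (R2 a b c d e f g h i && R2 d e f g h i a b c && R2 g h i a b c d e f) &&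
      (R3 a b c d e f g h i && R3 d e f g h i a b c && R3 g h i a b c d e f)) = true →
    a.toNat + b.toNat + c.toNat + (d.toNat + e.toNat + f.toNat) + (g.toNat + h.toNat + i.toNat) ≤
      2 + 2 * ((a && b && c).toNat + (d && e && f).toNat + (g && h && i).toNat) ∨
    (a.toNat + b.toNat + c.toNat + (d.toNat + e.toNat + f.toNat) + (g.toNat + h.toNat + i.toNat) ≤
      3 + 2 * ((a && b && c).toNat + (d && e && f).toNat + (g && h && i).toNat) ∧
      ¬ (a = false ∧ b = c ∧ d = g ∧ e = i ∧ f = h)) := by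
  decide +kernel

theorem R1_of (t : Fin 3 → Fin 3 → Bool) (h : F123 t) :
    R1 (t 0 0) (t 0 1) (t 0 2) (t 1 0) (t 1 1) (t 1 2) (t 2 0) (t 2 1) (t 2 2) = true := by
  have key := fun j s => h.1 0 j s
  unfold R1
  simp only [Bool.and_eq_true, Bool.not_eq_true']
  exact ⟨⟨⟨⟨⟨⟨⟨⟨key 0 0,
    key 0 1⟩,
    key 0 2⟩,
    key 1 0⟩,
    key 1 1⟩,
    key 1 2⟩,
    key 2 0⟩,
    key 2 1⟩,
    key 2 2⟩

theorem R2_of (t : Fin 3 → Fin 3 → Bool) (h : F123 t) (i k l : Fin 3) (hk : i + 1 = k)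
    (hl : i - 1 = l) : R2 (t i 0) (t i 1) (t i 2) (t k 0) (t k 1) (t k 2) (t l 0) (t l 1) (t l 2) = true := by
  subst hk hl
  have key := fun j s => h.2.1 i j s
  unfold R2
  simp only [Bool.and_eq_true, Bool.not_eq_true']
  exact ⟨⟨⟨⟨⟨⟨⟨⟨key 0 0,
    key 0 1⟩,
    key 0 2⟩,
    key 1 0⟩,
    key 1 1⟩,
    key 1 2⟩,
    key 2 0⟩,
    key 2 1⟩,
    key 2 2⟩

theorem R3_of (t : Fin 3 → Fin 3 → Bool) (h : F123 t) (i k l : Fin 3) (hk : i + 1 = k)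
    (hl : i - 1 = l) : R3 (t i 0) (t i 1) (t i 2) (t k 0) (t k 1) (t k 2) (t l 0) (t l 1) (t l 2) = true := by
  subst hk hl
  have key : ∀ j s s' k : Fin 3, s ≠ s' → (!(t (i + 1) (j + s) && t (i - 1) (j - s) &&
      t (i + 1) (j + s') && t (i - 1) (j - s')) || t (i + 1) k) = true := by
    intro j s s' k hs
    have := h.2.2 i j s s' hs
    generalize (t (i + 1) (j + s) && t (i - 1) (j - s) && t (i + 1) (j + s') &&
      t (i - 1) (j - s')) = q at *
    cases q
    · rfl
    · exact this rfl k
  unfold R3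
  simp only [Bool.and_eq_true]
  exact ⟨⟨⟨⟨⟨⟨⟨⟨key 0 0 1 2 (by decide),
    key 0 1 2 0 (by decide)⟩,
    key 0 2 0 1 (by decide)⟩,
    key 1 0 1 0 (by decide)⟩,
    key 1 1 2 1 (by decide)⟩,
    key 1 2 0 2 (by decide)⟩,
    key 2 0 1 1 (by decide)⟩,
    key 2 1 2 2 (by decide)⟩,
    key 2 2 0 0 (by decide)⟩

theorem comb_aux (t : Fin 3 → Fin 3 → Bool) (H : F123 t) :
    tcount t ≤ 2 + 2 * tlines t ∨ (tcount t ≤ 3 + 2 * tlines t ∧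
      ¬ (t 0 0 = false ∧ t 0 1 = t 0 2 ∧ t 1 0 = t 2 0 ∧ t 1 1 = t 2 2 ∧ t 1 2 = t 2 1)) := by
  unfold tcount tlines
  simp only [Fin.sum_univ_three]
  refine R_aux _ _ _ _ _ _ _ _ _ ?_
  simp only [Bool.and_eq_true]
  exact ⟨⟨R1_of _ H, ⟨R2_of _ H 0 1 2 rfl rfl, R2_of _ H 1 2 0 rfl rfl⟩, R2_of _ H 2 0 1 rfl rfl⟩,
    ⟨R3_of _ H 0 1 2 rfl rfl, R3_of _ H 1 2 0 rfl rfl⟩, R3_of _ H 2 0 1 rfl rfl⟩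

theorem comb1 (t : Fin 3 → Fin 3 → Bool) (h : F123 t) : tcount t ≤ 3 + 2 * tlines t := by
  have := comb_aux t h
  omega

theorem comb2 (t : Fin 3 → Fin 3 → Bool) (h : F123 t) (h0 : t 0 0 = false)
    (hs : ∀ i j, t i j = t (-i) (-j)) : tcount t ≤ 2 + 2 * tlines t := by
  have e1 : t 0 1 = t 0 2 := hs 0 1
  have e2 : t 1 0 = t 2 0 := hs 1 0
  have e3 : t 1 1 = t 2 2 := hs 1 1
  have e4 : t 1 2 = t 2 1 := hs 1 2
  rcases comb_aux t h with h1 | h1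
  · exact h1
  · exact absurd ⟨h0, e1, e2, e3, e4⟩ h1.2

end comb
end FI


namespace FI

open Subgroup

section caseB
variable {G : Type*} [Group G]

def pw (e : G) (i : Fin 3) : G := e ^ (i : ℕ)

theorem pw_zero (e : G) : pw e 0 = 1 := by simp [pw]
theorem pw_one (e : G) : pw e 1 = e := by simp [pw]

theorem pw_add {e : G} (he : e ^ 3 = 1) (i j : Fin 3) : pw e (i + j) = pw e i * pw e j := by
  unfold pw
  rw [Fin.val_add, ← pow_add]
  conv_rhs => rw [← Nat.div_add_mod ((i : ℕ) + j) 3, pow_add, pow_mul, he, one_pow, one_mul]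

theorem pw_neg {e : G} (he : e ^ 3 = 1) (i : Fin 3) : pw e (-i) = (pw e i)⁻¹ := by
  rw [eq_inv_iff_mul_eq_one, ← pw_add he]; simp [pw_zero]

theorem pw_pow3 {e : G} (he : e ^ 3 = 1) (i : Fin 3) : pw e i ^ 3 = 1 := by
  unfold pw; rw [← pow_mul, mul_comm, pow_mul, he, one_pow]

structure CaseB (P : Sylow 3 G) (e z : G) : Prop where
  zP : z ∈ P
  zc : ∀ p ∈ P, Commute p z
  z3 : z ^ 3 = 1
  z1 : z ≠ 1
  eP : e ∈ P
  e3 : e ^ 3 = 1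
  unq : ∀ j, Unq P (e * pw z j)
  c3 : ∀ j, C3 (e * pw z j)

variable {P : Sylow 3 G} {e z : G}

def uu (e z : G) (i j : Fin 3) : G := pw e i * pw z j

theorem CaseB.ez (h : CaseB P e z) : Commute e z := h.zc e h.eP

theorem CaseB.uu_add (h : CaseB P e z) (i j a b : Fin 3) :
    uu e z (i + a) (j + b) = uu e z i j * uu e z a b := by
  unfold uu
  rw [pw_add h.e3, pw_add h.z3]
  have : Commute (pw e a) (pw z j) := h.ez.pow_pow _ _
  calc _ = pw e i * (pw e a * pw z j) * pw z b := by group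
    _ = pw e i * (pw z j * pw e a) * pw z b := by rw [this.eq]
    _ = _ := by group

theorem CaseB.uu_zero : uu e z 0 0 = 1 := by simp [uu, pw_zero]

theorem CaseB.uu_neg (h : CaseB P e z) (i j : Fin 3) : uu e z (-i) (-j) = (uu e z i j)⁻¹ := by
  rw [eq_inv_iff_mul_eq_one, ← h.uu_add]; simp [CaseB.uu_zero]

theorem CaseB.uu_sub (h : CaseB P e z) (i j a b : Fin 3) :
    uu e z (i - a) (j - b) = uu e z i j * (uu e z a b)⁻¹ := by
  rw [sub_eq_add_neg, sub_eq_add_neg, h.uu_add, h.uu_neg]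

theorem CaseB.uu_comm (h : CaseB P e z) (i j a b : Fin 3) :
    Commute (uu e z i j) (uu e z a b) := by
  show _ * _ = _ * _
  rw [← h.uu_add, ← h.uu_add, add_comm, add_comm j]

theorem CaseB.uu_pow3 (h : CaseB P e z) (i j : Fin 3) : uu e z i j ^ 3 = 1 := by
  unfold uu
  have : Commute (pw e i) (pw z j) := h.ez.pow_pow _ _
  rw [this.mul_pow, pw_pow3 h.e3, pw_pow3 h.z3, one_mul]

theorem CaseB.uu_mem (h : CaseB P e z) (i j : Fin 3) : uu e z i j ∈ P :=
  mul_mem (pow_mem h.eP _) (pow_mem h.zP _)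

theorem CaseB.uu_one (j : Fin 3) : uu e z 1 j = e * pw z j := by
  simp [uu, pw_one]

theorem CaseB.uu_unq (h : CaseB P e z) {i : Fin 3} (hi : i ≠ 0) (j : Fin 3) :
    Unq P (uu e z i j) ∧ C3 (uu e z i j) := by
  have h1 : i = 1 ∨ i = -1 := by revert hi; revert i; decide
  rcases h1 with rfl | rfl
  · rw [CaseB.uu_one]; exact ⟨h.unq j, h.c3 j⟩
  · have : uu e z (-1) j = (uu e z 1 (-j))⁻¹ := by rw [← h.uu_neg, neg_neg]
    rw [this, CaseB.uu_one]
    exact ⟨(h.unq _).inv, (h.c3 _).inv⟩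

/-- cube condition -/
def TT (e z g : G) (i j : Fin 3) : Prop := (g * uu e z i j) ^ 3 = 1
/-- involution condition -/
def JJ (e z g : G) (i j : Fin 3) : Prop := orderOf (g * uu e z i j) = 2

theorem CaseB.TT_shift (h : CaseB P e z) (g : G) (i j a b : Fin 3) :
    TT e z g (i + a) (j + b) ↔ TT e z (g * uu e z i j) a b := by
  unfold TT; rw [h.uu_add, mul_assoc]

theorem CaseB.TT_shift' (h : CaseB P e z) (g : G) (i j a b : Fin 3) :
    TT e z g (i - a) (j - b) ↔ TT e z (g * uu e z i j) (-a) (-b) := by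
  rw [sub_eq_add_neg, sub_eq_add_neg, h.TT_shift]

theorem CaseB.JJ_shift (h : CaseB P e z) (g : G) (i j a b : Fin 3) :
    JJ e z g (i + a) (j + b) ↔ JJ e z (g * uu e z i j) a b := by
  unfold JJ; rw [h.uu_add, mul_assoc]

theorem CaseB.smul_ne (h : CaseB P e z) {g : G} (hg : g • P ≠ P) (i j : Fin 3) :
    (g * uu e z i j) • P ≠ P := by
  rw [mul_smul, smul_eq_of_mem (h.uu_mem i j)]; exact hg

theorem CaseB.f1 (h : CaseB P e z) {g : G} (hg : g • P ≠ P) (s : Fin 3)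
    (h0 : TT e z g 0 0) (h1 : TT e z g 1 s) (h2 : TT e z g (-1) (-s)) : False := by
  unfold TT at *
  rw [CaseB.uu_zero, mul_one] at h0
  rw [h.uu_neg] at h2
  exact hg (smul_eq_of_mem (fact1 (h.uu_unq (by decide) s).1 (h.uu_pow3 _ _) h0 h1 h2))

theorem CaseB.f2 (h : CaseB P e z) {g : G} (hg : g • P ≠ P) (s : Fin 3)
    (h0 : TT e z g 0 1) (h0' : TT e z g 0 (-1)) (h1 : TT e z g 1 s) (h2 : TT e z g (-1) (-s)) :
    False := by
  unfold TT at *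
  rw [h.uu_neg] at h2
  have : uu e z 0 (-1) = (uu e z 0 1)⁻¹ := by rw [← h.uu_neg]; rfl
  rw [this] at h0'
  refine hg (smul_eq_of_mem (fact2 (h.uu_comm 0 1 1 s) (h.uu_pow3 _ _) (h.uu_pow3 _ _) h0 h0'
    h1 h2 ?_ ?_ (h.uu_unq (by decide) s).1))
  · rw [← h.uu_sub]; exact (h.uu_unq (by decide) _).2
  · rw [← h.uu_add]; exact (h.uu_unq (by decide) _).2

theorem CaseB.f3 [Finite G] (h : CaseB P e z) {g : G} (s s' : Fin 3) (hs : s ≠ s')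
    (h0 : TT e z g 1 s) (h0' : TT e z g (-1) (-s)) (h1 : TT e z g 1 s')
    (h2 : TT e z g (-1) (-s')) (k : Fin 3) : TT e z g 1 k := by
  have key : ∀ j, uu e z 0 j = pw z j := by intro j; simp [uu, pw_zero]
  have hc : Commute g (uu e z 0 (s - s')) := by
    unfold TT at *
    rw [h.uu_neg] at h0' h2
    have e1 : uu e z 0 (s - s') = uu e z 1 s * (uu e z 1 s')⁻¹ := by rw [← h.uu_sub]; rfl
    rw [e1]
    refine fact3 (h.uu_comm _ _ _ _) (h.uu_pow3 _ _) (h.uu_pow3 _ _) h0 h0' h1 h2 ?_ ?_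
      (h.uu_unq (by decide) s').1
    · intro p hp
      rw [← e1, key]
      exact (h.zc p hp).pow_right _
    · rw [← h.uu_add]; exact (h.uu_unq (by decide) _).2
  have hc1 : Commute g (uu e z 0 (k - s)) := by
    have : uu e z 0 (k - s) = 1 ∨ uu e z 0 (k - s) = uu e z 0 (s - s') ∨
        uu e z 0 (k - s) = (uu e z 0 (s - s'))⁻¹ := by
      rw [← h.uu_neg]
      have : k - s = 0 ∨ k - s = s - s' ∨ k - s = -(s - s') := by
        revert hs; clear * -; revert k s s'; decide
      rcases this with h | h | h <;> rw [h]
      · left; exact CaseB.uu_zero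
      · right; left; rfl
      · right; right; rfl
    rcases this with h | h | h <;> rw [h]
    · exact Commute.one_right g
    · exact hc
    · exact hc.inv_right
  unfold TT at *
  have e2 : uu e z 1 k = uu e z 1 s * uu e z 0 (k - s) := by
    rw [← h.uu_add]; congr 1; abel
  rw [e2, ← mul_assoc]
  have : Commute (g * uu e z 1 s) (uu e z 0 (k - s)) := hc1.mul_left (h.uu_comm _ _ _ _)
  rw [this.mul_pow, h0, h.uu_pow3, one_mul]

open Classical in
noncomputable def tb (e z g : G) : Fin 3 → Fin 3 → Bool := fun i j => decide (TT e z g i j)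

theorem CaseB.f123 [Finite G] (h : CaseB P e z) {g : G} (hg : g • P ≠ P) : F123 (tb e z g) := by
  refine ⟨?_, ?_, ?_⟩
  · intro i j s
    by_contra hh
    simp only [tb, Bool.not_eq_false, Bool.and_eq_true, decide_eq_true_eq] at hh
    obtain ⟨⟨h0, h1⟩, h2⟩ := hh
    rw [h.TT_shift] at h1
    rw [h.TT_shift'] at h2
    have h0' : TT e z g (i + 0) (j + 0) := by simpa using h0
    rw [h.TT_shift] at h0'
    exact h.f1 (h.smul_ne hg i j) s h0' h1 h2
  · intro i j s
    by_contra hh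
    simp only [tb, Bool.not_eq_false, Bool.and_eq_true, decide_eq_true_eq] at hh
    obtain ⟨⟨⟨h0, h3⟩, h1⟩, h2⟩ := hh
    rw [h.TT_shift] at h1
    rw [h.TT_shift'] at h2
    have h0' : TT e z g (i + 0) (j + 1) := by simpa using h0
    have h3' : TT e z g (i + 0) (j + (-1)) := by simpa [sub_eq_add_neg] using h3
    rw [h.TT_shift] at h0' h3'
    exact h.f2 (h.smul_ne hg i j) s h0' h3' h1 h2
  · intro i j s s' hs hh k
    simp only [tb, Bool.and_eq_true, decide_eq_true_eq] at hh ⊢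
    obtain ⟨⟨⟨h0, h3⟩, h1⟩, h2⟩ := hh
    rw [h.TT_shift] at h0 h1
    rw [h.TT_shift'] at h3 h2
    have := h.f3 s s' hs h0 h3 h1 h2 (k - j)
    rw [← h.TT_shift] at this
    simpa using this

open Classical in
noncomputable def cT (e z g : G) : ℕ := ∑ i, ∑ j, if TT e z g i j then 1 else 0
open Classical in
noncomputable def cJ (e z g : G) : ℕ := ∑ i, ∑ j, if JJ e z g i j then 1 else 0
open Classical in
noncomputable def cL (e z g : G) : ℕ := ∑ i, if ∀ j, TT e z g i j then 1 else 0

theorem tcount_tb (g : G) : tcount (tb e z g) = cT e z g := by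
  unfold tcount cT tb
  refine Finset.sum_congr rfl fun i _ => Finset.sum_congr rfl fun j _ => ?_
  by_cases h : TT e z g i j <;> simp [h]

theorem tlines_tb (g : G) : tlines (tb e z g) = cL e z g := by
  classical
  unfold tlines cL tb
  refine Finset.sum_congr rfl fun i _ => ?_
  have : (∀ j, TT e z g i j) ↔ (TT e z g i 0 ∧ TT e z g i 1) ∧ TT e z g i 2 := by
    constructor
    · intro h; exact ⟨⟨h 0, h 1⟩, h 2⟩
    · rintro ⟨⟨a, b⟩, c⟩ j; fin_cases j <;> assumption
  by_cases h : ∀ j, TT e z g i j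
  · rw [if_pos h]; simp [h]
  · rw [if_neg h]
    rw [this] at h
    have : (decide (TT e z g i 0) && decide (TT e z g i 1) && decide (TT e z g i 2)) = false := by
      rw [← Bool.not_eq_true]
      simpa [Bool.and_eq_true] using h
    simp only [this, Bool.toNat_false]

theorem sum_shift2 (f : Fin 3 → Fin 3 → ℕ) (i j : Fin 3) :
    ∑ a, ∑ b, f (i + a) (j + b) = ∑ a, ∑ b, f a b := by
  conv_rhs => rw [← Equiv.sum_comp (Equiv.addLeft i)]
  refine Finset.sum_congr rfl fun a _ => ?_
  conv_rhs => rw [← Equiv.sum_comp (Equiv.addLeft j)]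
  rfl

theorem CaseB.cT_shift (h : CaseB P e z) (g : G) (i j : Fin 3) :
    cT e z (g * uu e z i j) = cT e z g := by
  classical
  unfold cT
  simp only [← h.TT_shift]
  exact sum_shift2 (fun i j => if TT e z g i j then 1 else 0) i j

theorem CaseB.cJ_shift (h : CaseB P e z) (g : G) (i j : Fin 3) :
    cJ e z (g * uu e z i j) = cJ e z g := by
  classical
  unfold cJ
  simp only [← h.JJ_shift]
  exact sum_shift2 (fun i j => if JJ e z g i j then 1 else 0) i j

theorem CaseB.cL_shift (h : CaseB P e z) (g : G) (i j : Fin 3) :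
    cL e z (g * uu e z i j) = cL e z g := by
  classical
  unfold cL
  simp only [← h.TT_shift]
  conv_rhs => rw [← Equiv.sum_comp (Equiv.addLeft i)]
  refine Finset.sum_congr rfl fun a _ => ?_
  have : (∀ b, TT e z g (i + a) (j + b)) ↔ (∀ b, TT e z g (i + a) b) :=
    ⟨fun hh b => by simpa using hh (b - j), fun hh b => hh _⟩
  simp only [this]; rfl

theorem inv_cube {g v : G} (hg : g ^ 2 = 1) (h : (g * v) ^ 3 = 1) : (g * v⁻¹) ^ 3 = 1 := by
  have hgg : g⁻¹ = g := by rw [inv_eq_iff_mul_eq_one, ← pow_two]; exact hg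
  have : g * v⁻¹ = (g⁻¹ * (g * v) * g⁻¹⁻¹)⁻¹ := by
    rw [inv_inv]
    calc g * v⁻¹ = g⁻¹ * v⁻¹ := by rw [hgg]
      _ = _ := by group
  rw [this, inv_pow, conj_pow, h]; group

theorem CaseB.local_main [Finite G] (h : CaseB P e z) {g : G} (hg : g • P ≠ P) :
    cT e z g + cJ e z g ≤ 3 + 2 * cL e z g := by
  classical
  by_cases hJ : ∃ i j, JJ e z g i j
  swap
  · have : cJ e z g = 0 := by
      unfold cJ
      push Not at hJ
      simp [hJ]
    have h2 := comb1 _ (h.f123 hg)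
    rw [tcount_tb, tlines_tb] at h2
    omega
  obtain ⟨i, j, hij⟩ := hJ
  rw [← h.cT_shift g i j, ← h.cJ_shift g i j, ← h.cL_shift g i j]
  replace hg := h.smul_ne hg i j
  unfold JJ at hij
  generalize g * uu e z i j = g at *
  have hg2 : g ^ 2 = 1 := by rw [← hij]; exact pow_orderOf_eq_one g
  have hgg : g⁻¹ = g := by rw [inv_eq_iff_mul_eq_one, ← pow_two]; exact hg2
  have hg1 : g ≠ 1 := by rintro rfl; simp at hij
  have hinv : ∀ a b, JJ e z g a b → g * uu e z a b * g⁻¹ = (uu e z a b)⁻¹ := by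
    intro a b hab
    have : (g * uu e z a b) ^ 2 = 1 := by unfold JJ at hab; rw [← hab]; exact pow_orderOf_eq_one _
    rw [hgg, eq_inv_iff_mul_eq_one]
    rw [pow_two] at this
    rw [← this]; group
  have hcol : ∀ a b, a ≠ 0 → ¬ JJ e z g a b := by
    intro a b ha hab
    apply hg
    obtain ⟨hu, -⟩ := h.uu_unq ha b
    refine hu.inv.2 _ ?_
    rw [mem_smul_iff]
    rw [← hinv a b hab]
    have : g⁻¹ * (g * uu e z a b * g⁻¹) * g = uu e z a b := by group
    rw [this]; exact hu.1
  have hcJ : cJ e z g = ∑ b, if JJ e z g 0 b then 1 else 0 := by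
    unfold cJ
    rw [Fin.sum_univ_succ]
    have : ∀ i : Fin 2, i.succ ≠ 0 := fun i => Fin.succ_ne_zero i
    simp [hcol _ _ (this _)]
  by_cases hz : ∃ b, b ≠ 0 ∧ JJ e z g 0 b
  · obtain ⟨b, hb, hJb⟩ := hz
    have hu := hinv 0 b hJb
    set v := uu e z 0 b with hv
    have hvz : v = pw z b := by simp [hv, uu, pw_zero]
    have hv1 : v ≠ 1 := by
      intro hv1
      have hz3 : orderOf z = 3 := orderOf_eq_prime h.z3 h.z1
      rw [hvz, pw] at hv1
      have := orderOf_dvd_of_pow_eq_one hv1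
      rw [hz3] at this
      have hb3 := b.2
      have : (b : ℕ) ≠ 0 := fun hh => hb (Fin.ext hh)
      have := Nat.le_of_dvd (by omega) ‹3 ∣ (b : ℕ)›
      omega
    have hT : ∀ a c, ¬ TT e z g a c := by
      intro a c hac
      unfold TT at hac
      have hcc : Commute (uu e z a c) v := by rw [hvz]; exact (h.zc _ (h.uu_mem a c)).pow_right _
      set y := g * uu e z a c with hy
      have h1 : y * v * y⁻¹ = v⁻¹ := by
        rw [hy, ← hu]
        calc _ = g * (uu e z a c * v * (uu e z a c)⁻¹) * g⁻¹ := by group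
          _ = _ := by rw [hcc.eq]; group
      have h2 : y ^ 3 * v * (y ^ 3)⁻¹ = v⁻¹ := by
        calc y ^ 3 * v * (y ^ 3)⁻¹ = y * (y * (y * v * y⁻¹) * y⁻¹) * y⁻¹ := by rw [pow_three]; group
          _ = y * (y * v⁻¹ * y⁻¹) * y⁻¹ := by rw [h1]
          _ = y * ((y * v * y⁻¹)⁻¹) * y⁻¹ := by group
          _ = _ := by rw [h1, inv_inv, h1]
      rw [hac] at h2
      have h3 : v * v = 1 := by
        have : v = v⁻¹ := by simpa using h2
        rwa [← inv_eq_iff_mul_eq_one, eq_comm]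
      have h4 : v ^ 3 = 1 := h.uu_pow3 _ _
      rw [pow_three, h3, mul_one] at h4
      exact hv1 h4
    have : cT e z g = 0 := by unfold cT; simp [hT]
    rw [this, hcJ]
    have : (∑ b, if JJ e z g 0 b then 1 else 0) ≤ ∑ b : Fin 3, 1 := by
      apply Finset.sum_le_sum; intro b _; split <;> simp
    simp at this ⊢
    omega
  · push Not at hz
    have : cJ e z g ≤ 1 := by
      rw [hcJ, Fin.sum_univ_succ]
      have : ∀ i : Fin 2, i.succ ≠ 0 := fun i => Fin.succ_ne_zero i
      simp only [hz _ (this _)]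
      split <;> simp
    have h2 := comb2 _ (h.f123 hg) (by
        simp only [tb, decide_eq_false_iff_not, TT, CaseB.uu_zero, mul_one]
        rw [pow_succ, hg2, one_mul]; exact hg1) (by
        intro i j
        simp only [tb]
        rw [decide_eq_decide]
        unfold TT
        rw [h.uu_neg]
        exact ⟨inv_cube hg2, fun hh => by simpa using inv_cube hg2 hh⟩)
    rw [tcount_tb, tlines_tb] at h2
    omega

end caseB
end FI


namespace FI

set_option linter.unusedSectionVars false

open Subgroup

section cnt
variable {α : Type*}

/-- number of elements satisfying a predicate -/
noncomputable def cnt (X : α → Prop) : ℕ := Nat.card {y // X y}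

theorem cnt_eq [Fintype α] (X : α → Prop) [DecidablePred X] : cnt X = ∑ y, if X y then 1 else 0 := by
  unfold cnt
  rw [Nat.card_eq_fintype_card, Fintype.card_subtype, Finset.card_filter]

theorem cnt_mono [Finite α] {X Y : α → Prop} (h : ∀ y, X y → Y y) : cnt X ≤ cnt Y :=
  Nat.card_le_card_of_injective (fun x : {y // X y} => (⟨x.1, h _ x.2⟩ : {y // Y y}))
    (fun a b hab => Subtype.ext (by simpa using hab))

theorem cnt_le_inj {β : Type*} [Finite β] {X : α → Prop} {Y : β → Prop} (f : α → β)
    (h : ∀ y, X y → Y (f y)) (hi : ∀ a b, X a → X b → f a = f b → a = b) : cnt X ≤ cnt Y :=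
  Nat.card_le_card_of_injective (fun x : {y // X y} => (⟨f x.1, h _ x.2⟩ : {y // Y y}))
    (fun a b hab => Subtype.ext (hi _ _ a.2 b.2 (by simpa using hab)))

theorem cnt_congr {X Y : α → Prop} (h : ∀ y, X y ↔ Y y) : cnt X = cnt Y := by
  have : X = Y := funext fun y => propext (h y)
  rw [this]

theorem cnt_split [Finite α] (X A : α → Prop) :
    cnt X = cnt (fun y => X y ∧ A y) + cnt (fun y => X y ∧ ¬ A y) := by
  classical
  have := Fintype.ofFinite α
  rw [cnt_eq, cnt_eq, cnt_eq, ← Finset.sum_add_distrib]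
  refine Finset.sum_congr rfl fun y _ => ?_
  by_cases h1 : X y <;> by_cases h2 : A y <;> simp [h1, h2]

theorem cnt_or_le [Finite α] (X Y : α → Prop) :
    cnt (fun y => X y ∨ Y y) ≤ cnt X + cnt Y := by
  rw [cnt_split _ X]
  gcongr
  · exact cnt_mono fun y h => h.2
  · exact cnt_mono fun y h => h.1.resolve_left h.2

theorem cnt_pos [Finite α] {X : α → Prop} {y : α} (h : X y) : 0 < cnt X := by
  unfold cnt
  have : Nonempty {y // X y} := ⟨⟨y, h⟩⟩
  exact Nat.card_pos

theorem cnt_true : cnt (fun _ : α => True) = Nat.card α := by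
  unfold cnt
  exact Nat.card_congr (Equiv.subtypeUnivEquiv (fun _ => trivial))

theorem cnt_eq_one (a : α) : cnt (fun y => y = a) = 1 := by
  unfold cnt; simp

theorem cnt_sub [Group α] (H : Subgroup α) : cnt (fun y => y ∈ H) = Nat.card H := rfl

end cnt

section sylow
variable {G : Type*} [Group G] [Finite G]

/-- number of Sylow subgroups through `y` -/
noncomputable def mm (y : G) : ℕ := cnt (fun Q : Sylow 3 G => y ∈ Q)

theorem smul_mem_conj {Q : Sylow 3 G} {g y : G} : g * y * g⁻¹ ∈ g • Q ↔ y ∈ Q := by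
  rw [mem_smul_iff]
  have : g⁻¹ * (g * y * g⁻¹) * g = y := by group
  rw [this]

theorem mm_conj (g y : G) : mm (g * y * g⁻¹) = mm y := by
  have key : ∀ g y : G, mm y ≤ mm (g * y * g⁻¹) := fun g y =>
    cnt_le_inj (fun Q : Sylow 3 G => g • Q) (fun Q h => smul_mem_conj.mpr h)
      (fun a b _ _ h => smul_left_cancel g h)
  refine le_antisymm ?_ (key g y)
  have := key g⁻¹ (g * y * g⁻¹)
  have h2 : g⁻¹ * (g * y * g⁻¹) * g⁻¹⁻¹ = y := by group
  rwa [h2] at this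

theorem mm_mod {y : G} (hy : P3 y) : mm y % 3 = 1 := by
  have h1 := (isPGroup_zpowers hy).card_modEq_card_fixedPoints (Sylow 3 G)
  have h2 := card_sylow_modEq_one 3 G
  have h3 : Nat.card (MulAction.fixedPoints (zpowers y) (Sylow 3 G)) = mm y := by
    unfold mm cnt
    apply Nat.card_congr
    apply Equiv.subtypeEquivRight
    intro Q
    have := (isPGroup_zpowers hy).sylow_mem_fixedPoints_iff (Q := Q)
    exact this.trans (zpowers_le (H := (Q : Subgroup G)))
  rw [h3] at h1
  exact (h1.symm.trans h2)

theorem unq_iff {P : Sylow 3 G} {y : G} (hy : y ∈ P) : Unq P y ↔ mm y = 1 := by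
  unfold mm cnt
  rw [Nat.card_eq_one_iff_unique]
  constructor
  · intro h
    exact ⟨⟨fun a b => Subtype.ext ((h.2 a a.2).trans (h.2 b b.2).symm)⟩, ⟨⟨P, hy⟩⟩⟩
  · rintro ⟨h, -⟩
    refine ⟨hy, fun Q hQ => ?_⟩
    have := @Subsingleton.elim _ h ⟨Q, hQ⟩ ⟨P, hy⟩
    exact congrArg Subtype.val this

theorem mm_ge_four {P : Sylow 3 G} {y : G} (hy : y ∈ P) (h : ¬ Unq P y) : 4 ≤ mm y := by
  rw [unq_iff hy] at h
  have h3 : P3 y := isPGroup_iff.mp P.2 y hy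
  have := mm_mod h3
  omega

theorem exists_smul (P Q : Sylow 3 G) : ∃ g : G, g • P = Q := MulAction.exists_smul_eq G P Q

theorem dcount [Fintype G] [Fintype (Sylow 3 G)] (f : Sylow 3 G → G → ℕ)
    (hf : ∀ g Q y, f (g • Q) (g * y * g⁻¹) = f Q y) (P : Sylow 3 G) :
    ∑ y, ∑ Q, f Q y = Nat.card (Sylow 3 G) * ∑ y, f P y := by
  rw [Finset.sum_comm]
  have : ∀ Q : Sylow 3 G, ∑ y, f Q y = ∑ y, f P y := by
    intro Q
    obtain ⟨g, rfl⟩ := exists_smul P Q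
    rw [← Equiv.sum_comp (MulAut.conj g).toEquiv]
    refine Finset.sum_congr rfl fun y _ => ?_
    exact hf g P y
  simp only [this]
  rw [Finset.sum_const, Finset.card_univ, smul_eq_mul, Nat.card_eq_fintype_card]

theorem unq_smul {P : Sylow 3 G} {g y : G} : Unq (g • P) (g * y * g⁻¹) ↔ Unq P y := by
  by_cases h : y ∈ P
  · rw [unq_iff h, unq_iff (smul_mem_conj.mpr h), mm_conj]
  · exact ⟨fun hh => absurd (smul_mem_conj.mp hh.1) h, fun hh => absurd hh.1 h⟩

theorem P3.exists_sylow {y : G} (h : P3 y) : ∃ Q : Sylow 3 G, y ∈ Q := by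
  obtain ⟨Q, hQ⟩ := (isPGroup_zpowers h).exists_le_sylow
  exact ⟨Q, hQ (mem_zpowers y)⟩

/-- double counting -/
theorem dc (P : Sylow 3 G) (X : G → Prop) (hX : ∀ g y, X y → X (g * y * g⁻¹))
    (h3 : ∀ y, X y → P3 y) :
    4 * cnt X ≤ Nat.card (Sylow 3 G) *
      (3 * cnt (fun y => X y ∧ Unq P y) + cnt (fun y => X y ∧ y ∈ P)) := by
  classical
  have := Fintype.ofFinite G
  have := Fintype.ofFinite (Sylow 3 G)
  have hX' : ∀ g y, X (g * y * g⁻¹) ↔ X y := by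
    refine fun g y => ⟨fun h => ?_, hX g y⟩
    have := hX g⁻¹ _ h
    have h2 : g⁻¹ * (g * y * g⁻¹) * g⁻¹⁻¹ = y := by group
    rwa [h2] at this
  have key := dcount (fun Q y => 3 * (if X y ∧ Unq Q y then 1 else 0) +
    (if X y ∧ y ∈ Q then 1 else 0)) (by
      intro g Q y
      simp only [hX', unq_smul, smul_mem_conj]) P
  rw [cnt_eq, cnt_eq, cnt_eq, Finset.mul_sum, Finset.mul_sum, ← Finset.sum_add_distrib]
  rw [← key]
  refine Finset.sum_le_sum fun y _ => ?_
  by_cases hy : X y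
  · simp only [hy, true_and, if_true]
    rw [Finset.sum_add_distrib, ← Finset.mul_sum]
    have hm : (∑ Q : Sylow 3 G, if y ∈ Q then 1 else 0) = mm y := by
      unfold mm; rw [cnt_eq]
    rw [hm]
    obtain ⟨Q, hQ⟩ := (h3 y hy).exists_sylow
    by_cases hu : Unq Q y
    · have h1 : (1 : ℕ) ≤ ∑ Q : Sylow 3 G, if Unq Q y then 1 else 0 := by
        have := Finset.single_le_sum (f := fun Q : Sylow 3 G => if Unq Q y then 1 else 0)
          (fun _ _ => Nat.zero_le _) (Finset.mem_univ Q)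
        simpa [hu] using this
      have h2 := (unq_iff hQ).mp hu
      omega
    · have := mm_ge_four hQ hu
      omega
  · simp [hy]

/-- exact count of incidences -/
theorem dc_mm (P : Sylow 3 G) (X : G → Prop) (hX : ∀ g y, X y → X (g * y * g⁻¹))
    (h3 : ∀ y, X y → P3 y) :
    cnt X ≤ Nat.card (Sylow 3 G) * cnt (fun y => X y ∧ y ∈ P) := by
  classical
  have := Fintype.ofFinite G
  have := Fintype.ofFinite (Sylow 3 G)
  have hX' : ∀ g y, X (g * y * g⁻¹) ↔ X y := by
    refine fun g y => ⟨fun h => ?_, hX g y⟩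
    have := hX g⁻¹ _ h
    have h2 : g⁻¹ * (g * y * g⁻¹) * g⁻¹⁻¹ = y := by group
    rwa [h2] at this
  have key := dcount (fun Q y => (if X y ∧ y ∈ Q then 1 else 0)) (by
      intro g Q y
      simp only [hX', smul_mem_conj]) P
  rw [cnt_eq, cnt_eq, ← key]
  refine Finset.sum_le_sum fun y _ => ?_
  by_cases hy : X y
  · simp only [hy, true_and, if_true]
    obtain ⟨Q, hQ⟩ := (h3 y hy).exists_sylow
    have := Finset.single_le_sum (f := fun Q : Sylow 3 G => if y ∈ Q then 1 else 0)
      (fun _ _ => Nat.zero_le _) (Finset.mem_univ Q)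
    simpa [hQ] using this
  · simp [hy]

theorem card_eq_mul (P : Sylow 3 G) :
    Nat.card G = Nat.card (Sylow 3 G) * Nat.card (normalizer (P : Set G)) := by
  rw [Sylow.card_eq_index_normalizer P, mul_comm]
  exact (Subgroup.card_mul_index _).symm

theorem exists_nu (P : Sylow 3 G) : ∃ ν : ℕ, 0 < ν ∧
    Nat.card (normalizer (P : Set G)) = ν * Nat.card P ∧
      Nat.card G = ν * Nat.card (Sylow 3 G) * Nat.card P ∧
      (ν = 1 → ∀ g : G, g • P = P → g ∈ P) := by
  have hd : Nat.card P ∣ Nat.card (normalizer (P : Set G)) :=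
    Subgroup.card_dvd_of_le (show (P : Subgroup G) ≤ _ from le_normalizer)
  obtain ⟨ν, hν⟩ := hd
  refine ⟨ν, ?_, by rw [hν, mul_comm], ?_, ?_⟩
  · rcases Nat.eq_zero_or_pos ν with h | h
    · rw [h, mul_zero] at hν
      exact absurd hν Nat.card_pos.ne'
    · exact h
  · rw [card_eq_mul P, hν]; ring
  · intro h g hg
    rw [h, mul_one] at hν
    have hle : (P : Subgroup G) ≤ normalizer (P : Set G) := le_normalizer
    have := Subgroup.eq_of_le_of_card_ge hle hν.le
    rw [Sylow.smul_eq_iff_mem_normalizer] at hg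
    have hg' : g ∈ (P : Subgroup G) := by rw [this]; exact hg
    exact hg'

end sylow
end FI


namespace FI

set_option linter.unusedSectionVars false

open Subgroup

section bs
variable {G : Type*} [Group G] [Finite G]

theorem exists_norm {A Y : Subgroup G} (hA : IsPGroup 3 A) (h : Y < A) :
    ∃ t ∈ A, t ∉ Y ∧ t ∈ normalizer (Y : Set G) := by
  have : Group.IsNilpotent A := hA.isNilpotent
  have hc : NormalizerCondition A := Group.normalizerCondition_of_isNilpotent
  have hlt : Y.subgroupOf A < ⊤ := by
    rw [lt_top_iff_ne_top, Ne, subgroupOf_eq_top]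
    exact not_le_of_gt h
  have := hc _ hlt
  rw [← subgroupOf_normalizer_eq h.le] at this
  obtain ⟨t, ht1, ht2⟩ := SetLike.exists_of_lt this
  exact ⟨t, t.2, ht2, ht1⟩

/-- class of z meeting A -/
def XA (z : G) (A : Sylow 3 G) : Set G := conjugatesOf z ∩ (A : Set G)

theorem conj_class {z x g : G} (h : x ∈ conjugatesOf z) : g * x * g⁻¹ ∈ conjugatesOf z := by
  exact IsConj.trans (show IsConj z x from h) (isConj_iff.mpr ⟨g, rfl⟩)

theorem XA_smul (z : G) (A : Sylow 3 G) (g : G) : XA z (g • A) = Set.image (MulAut.conj g) (XA z A) := by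
  ext x
  constructor
  · rintro ⟨h1, h2⟩
    refine ⟨g⁻¹ * x * g, ⟨?_, mem_smul_iff.mp h2⟩, ?_⟩
    · simpa using conj_class (g := g⁻¹) h1
    · simp only [MulAut.conj_apply]; group
  · rintro ⟨y, ⟨h1, h2⟩, rfl⟩
    exact ⟨conj_class h1, smul_mem_conj.mpr h2⟩

theorem XA_card (z : G) (A B : Sylow 3 G) : (XA z A).ncard = (XA z B).ncard := by
  obtain ⟨g, rfl⟩ := exists_smul A B
  rw [XA_smul, Set.ncard_image_of_injective _ (MulAut.conj g).injective]

theorem XA_eq_of_subset {z : G} {A B : Sylow 3 G} (h : XA z A ⊆ XA z B) : XA z A = XA z B :=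
  Set.eq_of_subset_of_ncard_le h (XA_card z B A).le (Set.toFinite _)

theorem XA_mem_norm {z v : G} {Y : Subgroup G} (hv : v ∈ normalizer (Y : Set G)) :
    v ∈ normalizer (conjugatesOf z ∩ (Y : Set G)) := by
  rw [mem_set_normalizer_iff] at *
  intro x
  have h1 : x ∈ conjugatesOf z ↔ v * x * v⁻¹ ∈ conjugatesOf z := by
    refine ⟨conj_class, fun h => ?_⟩
    have := conj_class (g := v⁻¹) h
    have h2 : v⁻¹ * (v * x * v⁻¹) * v⁻¹⁻¹ = x := by group
    rwa [h2] at this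
  exact and_congr h1 (hv x)

theorem exists_v {z : G} {A B : Sylow 3 G} (hne : XA z A ≠ XA z B) :
    ∃ v ∈ XA z A, v ∉ XA z A ∩ XA z B ∧ v ∈ normalizer (XA z A ∩ XA z B) := by
  set D := XA z A ∩ XA z B with hD
  have hDA : XA z A ≠ D := by
    intro h
    apply hne
    apply XA_eq_of_subset
    rw [h]; exact Set.inter_subset_right
  -- maximal Y
  let S : Set (Subgroup G) := {Y | Y ≤ A ∧ conjugatesOf z ∩ (Y : Set G) = D}
  have hS : S.Nonempty := by
    refine ⟨(A : Subgroup G) ⊓ B, inf_le_left, ?_⟩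
    ext x
    simp only [hD, XA, Set.mem_inter_iff, SetLike.mem_coe, Subgroup.mem_inf]
    tauto
  obtain ⟨Y, hY⟩ := (Set.toFinite S).exists_maximal hS
  have hlt : Y < (A : Subgroup G) := by
    refine lt_of_le_of_ne hY.prop.1 ?_
    intro h
    apply hDA
    rw [← hY.prop.2, h]; rfl
  obtain ⟨t, htA, htY, htN⟩ := exists_norm A.2 hlt
  set Y' := Y ⊔ zpowers t with hY'
  have h1 : Y < Y' := by
    refine lt_of_le_of_ne le_sup_left ?_
    intro h
    apply htY
    rw [h]; exact mem_sup_right (mem_zpowers t)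
  have h2 : Y' ≤ A := sup_le hlt.le (by rw [zpowers_le]; exact htA)
  have h3 : conjugatesOf z ∩ (Y' : Set G) ≠ D := by
    intro h
    exact hY.not_prop_of_gt h1 ⟨h2, h⟩
  have h4 : D ⊆ conjugatesOf z ∩ (Y' : Set G) := by
    rw [← hY.prop.2]
    exact Set.inter_subset_inter_right _ h1.le
  obtain ⟨v, hv, hvD⟩ := Set.exists_of_ssubset (lt_of_le_of_ne h4 h3.symm)
  refine ⟨v, ⟨hv.1, h2 hv.2⟩, hvD, ?_⟩
  have h5 : v ∈ normalizer (Y : Set G) := by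
    have : Y' ≤ normalizer (Y : Set G) := sup_le le_normalizer (by rw [zpowers_le]; exact htN)
    exact this hv.2
  rw [← hY.prop.2]
  exact XA_mem_norm h5

structure Good (z : G) (D : Set G) (a : G) (A : Sylow 3 G) : Prop where
  mem : a ∈ XA z A
  nD : a ∉ D
  sub : D ⊆ XA z A
  norm : a ∈ normalizer D

theorem Good.eq {z : G} {D : Set G} (hmax : ∀ A B : Sylow 3 G, XA z A ≠ XA z B →
    (XA z A ∩ XA z B).ncard ≤ D.ncard) {a : G} {A C : Sylow 3 G} (h : Good z D a A)
    (hD : D ⊆ C) (ha : a ∈ C) : XA z C = XA z A := by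
  by_contra hne
  have h1 := hmax _ _ hne
  have h2 : D ⊂ XA z C ∩ XA z A := by
    refine (Set.ssubset_iff_of_subset ?_).mpr ⟨a, ⟨⟨h.mem.1, ha⟩, h.mem⟩, h.nD⟩
    exact fun d hd => ⟨⟨(h.sub hd).1, hD hd⟩, h.sub hd⟩
  have := Set.ncard_lt_ncard h2 (Set.toFinite _)
  omega

theorem Good.pair {z : G} {D : Set G} (hmax : ∀ A B : Sylow 3 G, XA z A ≠ XA z B →
    (XA z A ∩ XA z B).ncard ≤ D.ncard) {a b : G} {A B C : Sylow 3 G} (h : Good z D a A)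
    (h' : Good z D b B) (ha : a ∈ C) (hb : b ∈ C) : XA z A = XA z B := by
  have h1 : IsPGroup 3 (closure {a, b} : Subgroup G) := by
    refine IsPGroup.to_le C.2 ?_
    rw [closure_le]
    rintro x (rfl | rfl)
    · exact ha
    · exact hb
  have h2 : IsPGroup 3 (closure D) := by
    refine IsPGroup.to_le A.2 ?_
    rw [closure_le]
    exact fun d hd => (h.sub hd).2
  have h3 : closure {a, b} ≤ normalizer (closure D : Set G) := by
    refine le_trans ?_ (normalizer_le_normalizer_closure D)
    rw [closure_le]
    rintro x (rfl | rfl)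
    · exact h.norm
    · exact h'.norm
  obtain ⟨Q, hQ⟩ := (IsPGroup.to_sup_of_normal_right' h1 h2 h3).exists_le_sylow
  have hDQ : D ⊆ Q := fun d hd => hQ (mem_sup_right (subset_closure hd))
  have haQ : a ∈ Q := hQ (mem_sup_left (subset_closure (by simp)))
  have hbQ : b ∈ Q := hQ (mem_sup_left (subset_closure (by simp)))
  rw [← h.eq hmax hDQ haQ, ← h'.eq hmax hDQ hbQ]

def NC (x y : G) : Prop := ∀ C : Sylow 3 G, x ∈ C → y ∈ C → False

theorem NC.symm {x y : G} (h : NC x y) : NC y x := fun C a b => h C b a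

theorem NC.conj {x y : G} (h : NC x y) (g : G) : NC (g * x * g⁻¹) (g * y * g⁻¹) := by
  intro C a b
  apply h (g⁻¹ • C)
  · rw [mem_smul_iff]; simpa using a
  · rw [mem_smul_iff]; simpa using b

theorem exists_four {z : G} (hz : z ^ 3 = 1) (hn : ∃ Q : Sylow 3 G, z ∉ Q) :
    ∃ a b c d : G, (a ∈ conjugatesOf z ∧ b ∈ conjugatesOf z ∧ c ∈ conjugatesOf z ∧
      d ∈ conjugatesOf z) ∧ NC a b ∧ NC a c ∧ NC a d ∧ NC b c ∧ NC b d ∧ NC c d := by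
  obtain ⟨Q, hQ⟩ := hn
  obtain ⟨A₀, hA₀⟩ := (P3.of_pow3 hz).exists_sylow
  have hzz : z ∈ conjugatesOf z := mem_conjugatesOf_self
  let T : Set (Sylow 3 G × Sylow 3 G) := {p | XA z p.1 ≠ XA z p.2}
  have hT : T.Nonempty := ⟨(A₀, Q), fun h => hQ ((h ▸ (⟨hzz, hA₀⟩ : z ∈ XA z A₀) : z ∈ XA z Q)).2⟩
  obtain ⟨⟨A, B⟩, hAB, hm⟩ :=
    Set.exists_max_image T (fun p => (XA z p.1 ∩ XA z p.2).ncard) (Set.toFinite T) hT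
  have hne : XA z A ≠ XA z B := hAB
  set D := XA z A ∩ XA z B with hD
  have hmax : ∀ A B : Sylow 3 G, XA z A ≠ XA z B → (XA z A ∩ XA z B).ncard ≤ D.ncard :=
    fun A' B' h => hm (A', B') h
  obtain ⟨v, hvA, hvD, hvN⟩ := exists_v hne
  obtain ⟨w, hwB, hwD, hwN⟩ := exists_v hne.symm
  rw [Set.inter_comm, ← hD] at hwD hwN
  rw [← hD] at hvD hvN
  have gv : Good z D v A := ⟨hvA, hvD, Set.inter_subset_left, hvN⟩
  have gw : Good z D w B := ⟨hwB, hwD, Set.inter_subset_right, hwN⟩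
  have n1 : NC v w := fun C a b => hne (gv.pair hmax gw a b)
  have hvN' := mem_set_normalizer_iff.mp hvN
  have gw' : Good z D (v * w * v⁻¹) (v • B) := by
    refine ⟨⟨conj_class hwB.1, smul_mem_conj.mpr hwB.2⟩, ?_, ?_, ?_⟩
    · intro h; exact hwD ((hvN' w).mpr h)
    · intro d hd
      refine ⟨hd.1.1, ?_⟩
      show d ∈ v • B
      rw [mem_smul_iff]
      have : v⁻¹ * d * v ∈ D := by
        rw [hvN']
        have : v * (v⁻¹ * d * v) * v⁻¹ = d := by group
        rwa [this]
      exact this.2.2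
    · exact mul_mem (mul_mem hvN hwN) (inv_mem hvN)
  have n2 : NC w (v * w * v⁻¹) := by
    intro C a b
    have h1 := gw.pair hmax gw' a b
    rw [XA_smul] at h1
    have h2 : v ∈ normalizer (XA z B) := mem_normalizer_iff_conj_image_eq.mpr h1.symm
    have h3 : IsPGroup 3 (closure (XA z B)) := by
      refine IsPGroup.to_le B.2 ?_
      rw [closure_le]
      exact fun d hd => hd.2
    have hv3 : IsPGroup 3 (zpowers v) := IsPGroup.to_le A.2 (by rw [zpowers_le]; exact hvA.2)
    obtain ⟨Q, hQ⟩ := (IsPGroup.to_sup_of_normal_right' hv3 h3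
      ((zpowers_le.mpr h2).trans (normalizer_le_normalizer_closure _))).exists_le_sylow
    have h4 : XA z B ⊆ XA z Q := fun x hx => ⟨hx.1, hQ (mem_sup_right (subset_closure hx))⟩
    have h5 := XA_eq_of_subset h4
    apply hvD
    refine ⟨hvA, ?_⟩
    rw [h5]
    exact ⟨hvA.1, hQ (mem_sup_left (mem_zpowers v))⟩
  have hv3 : v ^ 3 = 1 := by
    obtain ⟨c, hc⟩ := isConj_iff.mp (show IsConj z _ from hvA.1)
    rw [← hc, conj_pow, hz]; group
  refine ⟨v, w, v * w * v⁻¹, v⁻¹ * w * v, ⟨hvA.1, hwB.1, conj_class hwB.1, ?_⟩, n1, ?_, ?_, n2,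
    ?_, ?_⟩
  · simpa using conj_class (g := v⁻¹) hwB.1
  · simpa using n1.conj v
  · simpa using n1.conj v⁻¹
  · have := (n2.conj v⁻¹).symm
    have e : v⁻¹ * (v * w * v⁻¹) * v⁻¹⁻¹ = w := by group
    rw [e] at this
    simpa using this
  · have := n2.conj v
    rw [sq_conj hv3] at this
    exact this

theorem bs {z : G} (hz : z ^ 3 = 1) (hn : ∃ Q : Sylow 3 G, z ∉ Q) :
    4 * mm z ≤ Nat.card (Sylow 3 G) := by
  classical
  obtain ⟨a, b, c, d, ⟨ha, hb, hc, hd⟩, n1, n2, n3, n4, n5, n6⟩ := exists_four hz hn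
  have hm : ∀ x ∈ conjugatesOf z, mm z = mm x := by
    intro x hx
    obtain ⟨g, rfl⟩ := isConj_iff.mp (show IsConj z x from hx)
    rw [mm_conj]
  have := Fintype.ofFinite (Sylow 3 G)
  have : mm a + mm b + mm c + mm d ≤ Nat.card (Sylow 3 G) := by
    unfold mm
    rw [cnt_eq, cnt_eq, cnt_eq, cnt_eq, ← Finset.sum_add_distrib, ← Finset.sum_add_distrib,
      ← Finset.sum_add_distrib, Nat.card_eq_fintype_card, ← Finset.card_univ,
      Finset.card_eq_sum_ones]
    refine Finset.sum_le_sum fun Q _ => ?_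
    by_cases h1 : a ∈ Q <;> by_cases h2 : b ∈ Q <;> by_cases h3 : c ∈ Q <;> by_cases h4 : d ∈ Q <;>
      simp only [h1, h2, h3, h4, if_true, if_false] <;> first | omega | exfalso
    all_goals first | exact n1 Q h1 h2 | exact n2 Q h1 h3 | exact n3 Q h1 h4 | exact n4 Q h2 h3 |
      exact n5 Q h2 h4 | exact n6 Q h3 h4
  rw [← hm a ha, ← hm b hb, ← hm c hc, ← hm d hd] at this
  omega

end bs
end FI


namespace FI

set_option linter.unusedSectionVars false

open Subgroup

section b
variable {G : Type*} [Group G] [Finite G]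

theorem b2 {P : Sylow 3 G} {e w : G} (he : Unq P e) (hw : ∀ p ∈ P, Commute p w) (hwP : w ∈ P)
    (hc : C3 (e * w)) : Unq P (e * w) := by
  refine ⟨mul_mem he.1 hwP, fun A hA => ?_⟩
  by_contra hne
  set R : Subgroup G := (P : Subgroup G) ⊓ (A : Subgroup G) with hR
  have huR : e * w ∈ R := ⟨mul_mem he.1 hwP, hA⟩
  have hlt : R < (A : Subgroup G) := by
    refine lt_of_le_of_ne inf_le_right fun h => hne ?_
    have h1 : (A : Subgroup G) ≤ P := by rw [← h]; exact inf_le_left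
    exact Sylow.ext (A.3 P.2 h1).symm
  obtain ⟨t, htA, htR, htN⟩ := exists_norm A.2 hlt
  set C : Subgroup G := centralizer (R : Set G) with hC
  have hC3 : IsPGroup 3 C := by
    rw [isPGroup_iff]
    intro x hx
    exact hc.p3 ((mem_centralizer_iff.mp hx _ huR).symm)
  set B : Subgroup G := (A : Subgroup G) ⊓ normalizer (R : Set G) with hB
  have hB3 : IsPGroup 3 B := A.2.to_le inf_le_left
  have hBC : B ≤ normalizer (C : Set G) := by
    have key : ∀ b ∈ normalizer (R : Set G), ∀ x ∈ C, b * x * b⁻¹ ∈ C := by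
      intro b hb x hx
      rw [hC, mem_centralizer_iff] at *
      intro r hr
      have h1 : b⁻¹ * r * b ∈ R := by
        have := (mem_normalizer_iff.mp (inv_mem hb) r).mp hr
        simpa using this
      have h2 := hx _ h1
      calc r * (b * x * b⁻¹) = b * (b⁻¹ * r * b * x) * b⁻¹ := by group
        _ = b * (x * (b⁻¹ * r * b)) * b⁻¹ := by rw [h2]
        _ = _ := by group
    intro b hb
    rw [mem_normalizer_iff]
    refine fun x => ⟨key b hb.2 x, fun hx => ?_⟩
    have := key b⁻¹ (inv_mem hb.2) _ hx
    have h2 : b⁻¹ * (b * x * b⁻¹) * b⁻¹⁻¹ = x := by group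
    rwa [h2] at this
  have hH : IsPGroup 3 (B ⊔ C : Subgroup G) := IsPGroup.to_sup_of_normal_right' hB3 hC3 hBC
  have hwC : w ∈ C := by
    rw [hC, mem_centralizer_iff]
    exact fun r hr => (hw r hr.1).eq
  have huB : e * w ∈ B := ⟨hA, le_normalizer huR⟩
  have heH : e ∈ B ⊔ C := by
    have : e = (e * w) * w⁻¹ := by group
    rw [this]
    exact mul_mem (mem_sup_left huB) (inv_mem (mem_sup_right hwC))
  have hle := he.le hH heH
  exact htR ⟨hle (mem_sup_left ⟨htA, htN⟩), htA⟩

theorem mem_of_smul_eq {A : Sylow 3 G} {u : G} (hu : P3 u) (h : u • A = A) : u ∈ A := by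
  have h1 := (isPGroup_zpowers hu).inf_normalizer_sylow A
  rw [Sylow.smul_eq_iff_mem_normalizer] at h
  have : u ∈ zpowers u ⊓ normalizer (A : Set G) := ⟨mem_zpowers u, h⟩
  rw [h1] at this
  exact this.2

variable {P : Sylow 3 G} {e z : G}

theorem card_sylow_eq (P Q : Sylow 3 G) : Nat.card P = Nat.card Q :=
  Nat.card_congr (Sylow.equiv P Q).toEquiv

theorem CaseB.ten (h : CaseB P e z) (hz : mm z = 1) (hn : 1 < Nat.card (Sylow 3 G)) :
    10 ≤ Nat.card (Sylow 3 G) := by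
  have : Nontrivial (Sylow 3 G) := Finite.one_lt_card_iff_nontrivial.mp hn
  obtain ⟨A, hA⟩ := exists_ne P
  have hzu := (unq_iff h.zP).mpr hz
  have hall : ∀ i j, uu e z i j • A = A → i = 0 ∧ j = 0 := by
    intro i j hij
    have hP : uu e z i j ∈ P := h.uu_mem i j
    have h3 : P3 (uu e z i j) := isPGroup_iff.mp P.2 _ hP
    have hm := mem_of_smul_eq h3 hij
    by_contra hcon
    apply hA
    by_cases hi : i = 0
    · subst hi
      have hj : j = 1 ∨ j = 2 := by
        fin_cases j
        · exact absurd ⟨rfl, rfl⟩ hcon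
        · left; rfl
        · right; rfl
      have hz2 : z * z = z⁻¹ := by
        rw [eq_inv_iff_mul_eq_one, mul_assoc, ← pow_three]; exact h.z3
      rcases hj with rfl | rfl
      · refine hzu.2 A ?_
        simpa [uu, pw_zero, pw_one] using hm
      · refine hzu.inv.2 A ?_
        have : uu e z 0 2 = z⁻¹ := by simp [uu, pw, ← hz2, pow_two]
        rwa [this] at hm
    · exact (h.uu_unq hi j).1.2 A hm
  have hinj : Function.Injective (fun o : Option (Fin 3 × Fin 3) =>
      (match o with
        | none => P
        | some p => uu e z p.1 p.2 • A : Sylow 3 G)) := by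
    have hP : ∀ p : Fin 3 × Fin 3, uu e z p.1 p.2 • A ≠ P := by
      intro p hp
      apply hA
      have h1 := smul_eq_of_mem (inv_mem (h.uu_mem p.1 p.2))
      rw [← hp, inv_smul_smul] at h1
      rw [hp] at h1
      exact h1
    rintro (_ | ⟨i, j⟩) (_ | ⟨a, b⟩) hab
    · rfl
    · exact absurd hab.symm (hP (a, b))
    · exact absurd hab (hP (i, j))
    · have hab' : uu e z i j • A = uu e z a b • A := hab
      have h2 : uu e z (-a + i) (-b + j) • A = A := by
        rw [h.uu_add, h.uu_neg, mul_smul, hab', inv_smul_smul]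
      obtain ⟨h3, h4⟩ := hall _ _ h2
      have h5 : i = a := by rw [neg_add_eq_zero] at h3; exact h3.symm
      have h6 : j = b := by rw [neg_add_eq_zero] at h4; exact h4.symm
      rw [h5, h6]
  have := Nat.card_le_card_of_injective _ hinj
  simpa using this

/-- the exceptional lines -/
def LL (P : Sylow 3 G) (z g : G) : Prop := g • P ≠ P ∧ ∀ j, (g * pw z j) ^ 3 = 1

theorem LL_bound (hzP : z ∈ P) (hz3 : z ^ 3 = 1) :
    cnt (LL P z) + Nat.card P ≤ mm z * Nat.card P := by
  classical
  have := Fintype.ofFinite G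
  have := Fintype.ofFinite (Sylow 3 G)
  have h1 : cnt (LL P z) ≤ cnt (fun A : Sylow 3 G => z ∈ A ∧ A ≠ P) * Nat.card P := by
    rw [cnt_eq, cnt_eq, Finset.sum_mul]
    calc ∑ g : G, (if LL P z g then 1 else 0)
        ≤ ∑ g : G, ∑ A : Sylow 3 G, if (z ∈ A ∧ A ≠ P) ∧ g ∈ A then 1 else 0 := by
          refine Finset.sum_le_sum fun g _ => ?_
          by_cases hg : LL P z g
          · obtain ⟨hgP, hj⟩ := hg
            have a0 : g ^ 3 = 1 := by simpa [pw_zero] using hj 0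
            have a1 : (g * z) ^ 3 = 1 := by simpa [pw_one] using hj 1
            have a2 : (g * z⁻¹) ^ 3 = 1 := by
              have := hj (-1)
              rwa [pw_neg hz3, pw_one] at this
            obtain ⟨H, hH, hgH, hzH⟩ := line_lemma a0 hz3 a1 a2
            obtain ⟨A, hA⟩ := hH.exists_le_sylow
            have hgA : g ∈ A := hA hgH
            have hne : A ≠ P := by
              rintro rfl
              exact hgP (smul_eq_of_mem hgA)
            have h2 := Finset.single_le_sum
              (f := fun A : Sylow 3 G => if (z ∈ A ∧ A ≠ P) ∧ g ∈ A then 1 else 0)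
              (fun _ _ => Nat.zero_le _) (Finset.mem_univ A)
            have hzA : z ∈ A := hA hzH
            simp only [hzA, hne, hgA, ne_eq, not_false_eq_true, and_self, if_true] at h2
            split_ifs
            · exact h2
            · exact Nat.zero_le _
          · simp [hg]
      _ = ∑ A : Sylow 3 G, ∑ g : G, if (z ∈ A ∧ A ≠ P) ∧ g ∈ A then 1 else 0 := Finset.sum_comm
      _ ≤ ∑ A : Sylow 3 G, (if z ∈ A ∧ A ≠ P then 1 else 0) * Nat.card P := by
          refine Finset.sum_le_sum fun A _ => ?_
          by_cases hA : z ∈ A ∧ A ≠ P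
          · simp only [hA, ne_eq, not_false_eq_true, and_self, true_and, if_true, one_mul]
            rw [card_sylow_eq P A, ← cnt_eq]
            exact le_of_eq rfl
          · simp [hA]
  have h2 : mm z = cnt (fun A : Sylow 3 G => A = P) + cnt (fun A : Sylow 3 G => z ∈ A ∧ A ≠ P) := by
    unfold mm
    rw [cnt_split _ (fun A => A = P)]
    congr 1
    exact cnt_congr fun A => ⟨fun h => h.2, fun h => ⟨h ▸ hzP, h⟩⟩
  rw [cnt_eq_one] at h2
  rw [h2]
  linarith

theorem cnt_mul_right (X : G → Prop) (c : G) : cnt (fun g => X (g * c)) = cnt X := by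
  refine le_antisymm (cnt_le_inj (fun g => g * c) (fun _ h => h) (fun a b _ _ h => mul_right_cancel h))
    (cnt_le_inj (fun g => g * c⁻¹) (fun y h => by simpa using h)
      (fun a b _ _ h => mul_right_cancel h))

theorem CaseB.b4 (h : CaseB P e z) :
    9 * (cnt (fun y : G => y ^ 3 = 1) + cnt (fun y : G => orderOf y = 2)) ≤
      3 * Nat.card G + 6 * Nat.card (normalizer (P : Set G)) + 6 * cnt (LL P z) := by
  classical
  have := Fintype.ofFinite G
  have e1 : ∑ g : G, cT e z g = 9 * cnt (fun y : G => y ^ 3 = 1) := by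
    unfold cT
    rw [Finset.sum_comm]
    simp only [Finset.sum_comm (s := (Finset.univ : Finset G))]
    have : ∀ i j, ∑ g : G, (if TT e z g i j then 1 else 0) = cnt (fun y : G => y ^ 3 = 1) := by
      intro i j
      rw [← cnt_mul_right _ (uu e z i j), cnt_eq]
      rfl
    simp only [this]
    simp [← mul_assoc]
  have e2 : ∑ g : G, cJ e z g = 9 * cnt (fun y : G => orderOf y = 2) := by
    unfold cJ
    rw [Finset.sum_comm]
    simp only [Finset.sum_comm (s := (Finset.univ : Finset G))]
    have : ∀ i j, ∑ g : G, (if JJ e z g i j then 1 else 0) = cnt (fun y : G => orderOf y = 2) := by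
      intro i j
      rw [← cnt_mul_right _ (uu e z i j), cnt_eq]
      refine Finset.sum_congr rfl fun g _ => ?_
      unfold JJ
      congr
    simp only [this]
    simp [← mul_assoc]
  have e3 : ∀ i, cnt (fun g : G => g • P ≠ P ∧ ∀ j, TT e z g i j) = cnt (LL P z) := by
    intro i
    rw [← cnt_mul_right (LL P z) (pw e i)]
    refine cnt_congr fun g => ?_
    unfold LL TT uu
    have : (g * pw e i) • P = g • P := by
      rw [mul_smul, smul_eq_of_mem (show pw e i ∈ P from pow_mem h.eP _)]
    rw [this]
    simp only [mul_assoc]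
  have e4 : cnt (fun g : G => g • P = P) = Nat.card (normalizer (P : Set G)) := by
    rw [← cnt_sub]
    exact cnt_congr fun g => Sylow.smul_eq_iff_mem_normalizer
  rw [mul_add, ← e1, ← e2, ← Finset.sum_add_distrib, ← e4]
  have e5 : 6 * cnt (LL P z) = 2 * ∑ i : Fin 3, cnt (fun g : G => g • P ≠ P ∧ ∀ j, TT e z g i j) := by
    simp only [e3]; simp; ring
  rw [e5]
  simp only [cnt_eq]
  rw [Finset.sum_comm, Nat.card_eq_fintype_card, ← Finset.card_univ, Finset.card_eq_sum_ones,
    Finset.mul_sum, Finset.mul_sum, Finset.mul_sum, ← Finset.sum_add_distrib,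
    ← Finset.sum_add_distrib]
  refine Finset.sum_le_sum fun g _ => ?_
  by_cases hg : g • P = P
  · simp only [hg, if_true]
    have : cT e z g + cJ e z g ≤ 9 := by
      unfold cT cJ
      rw [← Finset.sum_add_distrib]
      simp only [← Finset.sum_add_distrib]
      calc _ ≤ ∑ i : Fin 3, ∑ j : Fin 3, 1 := by
            refine Finset.sum_le_sum fun i _ => Finset.sum_le_sum fun j _ => ?_
            by_cases a : TT e z g i j <;> by_cases b : JJ e z g i j <;> simp [a, b]
            unfold TT at a
            unfold JJ at b
            have := orderOf_dvd_of_pow_eq_one a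
            rw [b] at this
            omega
        _ = 9 := by simp
    omega
  · have := h.local_main hg
    simp only [hg, if_false]
    have e6 : cL e z g = ∑ i : Fin 3, if g • P ≠ P ∧ ∀ j, TT e z g i j then 1 else 0 := by
      unfold cL
      simp [hg]
    rw [← e6]
    omega

end b
end FI


namespace FI

set_option linter.unusedSectionVars false

open Subgroup

/-- first weight -/
def gam (n : ℕ) : ℤ := if n = 2 then 0 else 4 - (n : ℤ)
/-- second weight -/
def ff (n : ℕ) : ℤ := if n = 2 then 1 else 4 - (n : ℤ)

section w
variable (w : ℕ → ℤ) (G : Type*) [Group G] [Finite G]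

/-- weighted sum of element orders -/
noncomputable def wsum : ℤ :=
  letI := Fintype.ofFinite G
  ∑ y : G, w (orderOf y)

theorem wsum_eq [h : Fintype G] : wsum w G = ∑ y : G, w (orderOf y) := by
  unfold wsum
  rw [Subsingleton.elim (Fintype.ofFinite G) h]

/-- the two averaged inequalities -/
def Hyp : Prop := 7 * (Nat.card G : ℤ) ≤ 20 * wsum gam G ∧
  451 * (Nat.card G : ℤ) ≤ 1000 * wsum ff G
end w

section s
variable {G : Type*} [Group G] [Finite G]

/-- order 3 with centralizer a 3-group -/
def S0 (y : G) : Prop := orderOf y = 3 ∧ C3 y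

theorem cnt_int [Fintype G] (X : G → Prop) [DecidablePred X] :
    (cnt X : ℤ) = ∑ y, if X y then (1 : ℤ) else 0 := by
  rw [cnt_eq]; push_cast; rfl

theorem wsum_gam_le : wsum gam G ≤
    3 + cnt (fun y : G => orderOf y = 3) - 2 * cnt (fun y : G => 6 ≤ orderOf y) := by
  classical
  have := Fintype.ofFinite G
  have h1 : (cnt (fun y : G => y = 1) : ℤ) = 1 := by rw [cnt_eq_one]; rfl
  have : (3 : ℤ) = 3 * cnt (fun y : G => y = 1) := by rw [h1]; rfl
  rw [this, wsum_eq, cnt_int, cnt_int, cnt_int, Finset.mul_sum, Finset.mul_sum,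
    ← Finset.sum_add_distrib, ← Finset.sum_sub_distrib]
  refine Finset.sum_le_sum fun y _ => ?_
  unfold gam
  have hp := orderOf_pos y
  have ho : y = 1 ↔ orderOf y = 1 := orderOf_eq_one_iff.symm
  simp only [ho]
  generalize orderOf y = n at *
  split_ifs <;> omega

theorem wsum_ff_le : wsum ff G ≤
    2 + cnt (fun y : G => y ^ 3 = 1) + cnt (fun y : G => orderOf y = 2) := by
  classical
  have := Fintype.ofFinite G
  have h1 : (cnt (fun y : G => y = 1) : ℤ) = 1 := by rw [cnt_eq_one]; rfl
  have : (2 : ℤ) = 2 * cnt (fun y : G => y = 1) := by rw [h1]; rfl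
  rw [this, wsum_eq, cnt_int, cnt_int, cnt_int, Finset.mul_sum,
    ← Finset.sum_add_distrib, ← Finset.sum_add_distrib]
  refine Finset.sum_le_sum fun y _ => ?_
  unfold ff
  have hp := orderOf_pos y
  have ho : y = 1 ↔ orderOf y = 1 := orderOf_eq_one_iff.symm
  have h3 : y ^ 3 = 1 ↔ orderOf y = 1 ∨ orderOf y = 3 := by
    rw [← orderOf_dvd_iff_pow_eq_one, Nat.dvd_prime Nat.prime_three]
  simp only [ho, h3]
  generalize orderOf y = n at *
  split_ifs <;> omega

theorem cnt_nC3 : cnt (fun y : G => orderOf y = 3 ∧ ¬ C3 y) ≤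
    cnt (fun y : G => 6 ≤ orderOf y ∧ ¬ P3 y) := by
  classical
  obtain ⟨k, N, hN3, hN⟩ : ∃ k N : ℕ, ¬ 3 ∣ N ∧ Nat.card G = 3 ^ k * N :=
    Nat.exists_eq_pow_mul_and_not_dvd Nat.card_pos.ne' 3 (by norm_num)
  have hNN : ∃ q, N * N = 3 * q + 1 := by
    have : N % 3 = 1 ∨ N % 3 = 2 := by omega
    have h : N * N % 3 = 1 := by rcases this with h | h <;> simp [Nat.mul_mod, h]
    exact ⟨N * N / 3, by omega⟩
  have hex : ∀ y : G, (orderOf y = 3 ∧ ¬ C3 y) → ∃ c : G, Commute c y ∧ c ≠ 1 ∧ c ^ N = 1 := by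
    rintro y ⟨-, h⟩
    unfold C3 at h
    rw [isPGroup_iff] at h
    push Not at h
    obtain ⟨c, hc, hc3⟩ := h
    rw [mem_centralizer_singleton_iff] at hc
    refine ⟨c ^ 3 ^ k, Commute.pow_left hc _, fun h => hc3 ⟨k, h⟩, ?_⟩
    rw [← pow_mul, ← hN]
    exact pow_card_eq_one'
  choose! c hc1 hc2 hc3 using hex
  have hcop : ∀ y : G, (orderOf y = 3 ∧ ¬ C3 y) → ∀ m, (c y) ^ 3 ^ m = 1 → False := by
    intro y hy m hm
    apply hc2 y hy
    have h1 := orderOf_dvd_of_pow_eq_one hm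
    have h2 := orderOf_dvd_of_pow_eq_one (hc3 y hy)
    have h3 : Nat.Coprime (3 ^ m) N :=
      Nat.Coprime.pow_left _ ((Nat.Prime.coprime_iff_not_dvd Nat.prime_three).mpr hN3)
    have := Nat.dvd_gcd h1 h2
    rw [h3] at this
    exact orderOf_eq_one_iff.mp (Nat.dvd_one.mp this)
  have hpow : ∀ y : G, (orderOf y = 3 ∧ ¬ C3 y) → (y * c y) ^ (N * N) = y := by
    intro y hy
    rw [(hc1 y hy).symm.mul_pow, pow_mul (c y), hc3 y hy, one_pow, mul_one]
    obtain ⟨q, hq⟩ := hNN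
    rw [hq, pow_succ, pow_mul]
    have : y ^ 3 = 1 := by rw [← hy.1]; exact pow_orderOf_eq_one y
    rw [this]; simp
  have hP : ∀ y : G, (orderOf y = 3 ∧ ¬ C3 y) → ¬ P3 (y * c y) := by
    rintro y hy ⟨m, hm⟩
    have h3 : y ^ 3 = 1 := by rw [← hy.1]; exact pow_orderOf_eq_one y
    apply hcop y hy (m + 1)
    have h4 : (y * c y) ^ 3 ^ (m + 1) = 1 := by rw [pow_succ, pow_mul, hm, one_pow]
    rw [(hc1 y hy).symm.mul_pow] at h4
    rw [pow_succ', pow_mul y, h3, one_pow, one_mul] at h4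
    rw [pow_succ']
    exact h4
  refine cnt_le_inj (fun y => y * c y) (fun y hy => ⟨?_, hP y hy⟩) ?_
  · have h1 : 3 ∣ orderOf (y * c y) := by
      rw [← hy.1]
      conv_lhs => rw [← hpow y hy]
      exact orderOf_pow_dvd _
    have h2 : orderOf (y * c y) ≠ 3 := by
      intro h
      exact hP y hy ⟨1, by rw [pow_one, ← h]; exact pow_orderOf_eq_one _⟩
    have := orderOf_pos (y * c y)
    show 6 ≤ orderOf (y * c y)
    omega
  · intro a b ha hb hab
    rw [← hpow a ha, ← hpow b hb]
    exact congrArg (· ^ (N * N)) hab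

theorem cnt_S_split : cnt (fun y : G => orderOf y = 3) =
    cnt (S0 : G → Prop) + cnt (fun y : G => orderOf y = 3 ∧ ¬ C3 y) := cnt_split _ _

theorem gam_S0 : wsum gam G ≤ 3 + cnt (S0 : G → Prop) := by
  have h1 := wsum_gam_le (G := G)
  have h2 := cnt_nC3 (G := G)
  have h3 := cnt_S_split (G := G)
  have h4 : cnt (fun y : G => 6 ≤ orderOf y ∧ ¬ P3 y) ≤ cnt (fun y : G => 6 ≤ orderOf y) :=
    cnt_mono fun y h => h.1
  omega

theorem cnt_two {X : G → Prop} {a b : G} (ha : X a) (hb : X b) (hab : a ≠ b) : 2 ≤ cnt X := by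
  have : Nontrivial {y // X y} := ⟨⟨a, ha⟩, ⟨b, hb⟩, fun h => hab (congrArg Subtype.val h)⟩
  exact Finite.one_lt_card

theorem ne_inv_of {y : G} (h : 3 ≤ orderOf y) : y ≠ y⁻¹ := by
  intro hh
  have : y ^ 2 = 1 := by rw [pow_two]; nth_rewrite 1 [hh]; simp
  have := Nat.le_of_dvd (by norm_num) (orderOf_dvd_of_pow_eq_one this)
  omega

theorem gam_S0' {t : G} (ht : P3 t) (ht1 : t ≠ 1) (ht0 : ¬ S0 t) :
    wsum gam G ≤ 1 + cnt (S0 : G → Prop) := by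
  have h1 := wsum_gam_le (G := G)
  have h2 := cnt_nC3 (G := G)
  have h3 := cnt_S_split (G := G)
  have h4 := cnt_split (fun y : G => 6 ≤ orderOf y) P3
  by_cases h : orderOf t = 3
  · have hc : ¬ C3 t := fun hc => ht0 ⟨h, hc⟩
    have : 2 ≤ cnt (fun y : G => orderOf y = 3 ∧ ¬ C3 y) :=
      cnt_two (a := t) (b := t⁻¹) ⟨h, hc⟩
        ⟨by rw [orderOf_inv]; exact h, fun hh => hc (by simpa using hh.inv)⟩ (ne_inv_of (by omega))
    omega
  · have h6 : 6 ≤ orderOf t := by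
      obtain ⟨k, hk⟩ := ht
      obtain ⟨m, -, hm⟩ := (Nat.dvd_prime_pow Nat.prime_three).mp (orderOf_dvd_of_pow_eq_one hk)
      rw [hm] at h ⊢
      match m with
      | 0 => exact absurd (orderOf_eq_one_iff.mp (by rw [hm]; rfl)) ht1
      | 1 => exact absurd (by norm_num) h
      | (m + 2) => rw [pow_add]; have := Nat.one_le_pow m 3 (by norm_num); omega
    have : 0 < cnt (fun y : G => 6 ≤ orderOf y ∧ P3 y) := cnt_pos ⟨h6, ht⟩
    omega

theorem S0_conj (g y : G) (h : S0 y) : S0 (g * y * g⁻¹) := by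
  refine ⟨?_, ?_⟩
  · rw [← h.1]
    exact orderOf_injective (MulAut.conj g).toMonoidHom (MulAut.conj g).injective y
  · have h2 := h.2
    unfold C3 at *
    rw [isPGroup_iff] at *
    intro x hx
    rw [mem_centralizer_singleton_iff] at hx
    have h3 : P3 (g⁻¹ * x * g) := by
      apply h2
      rw [mem_centralizer_singleton_iff]
      calc g⁻¹ * x * g * y = g⁻¹ * (x * (g * y * g⁻¹)) * g := by group
        _ = g⁻¹ * (g * y * g⁻¹ * x) * g := by rw [hx]
        _ = _ := by group
    have h4 := h3.conj (b := g)
    have h5 : g * (g⁻¹ * x * g) * g⁻¹ = x := by group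
    rwa [h5] at h4

theorem S0_p3 (y : G) (h : S0 y) : P3 y := ⟨1, by rw [pow_one, ← h.1]; exact pow_orderOf_eq_one y⟩

theorem hypB {P : Sylow 3 G} {z : G} (hz : z ∈ P)
    (hz3 : orderOf z = 3) (hG : Nat.card G = 2 * Nat.card (Sylow 3 G) * Nat.card P)
    (hn : 4 ≤ Nat.card (Sylow 3 G)) (hP : 9 ≤ Nat.card P) (hyp : Hyp G) :
    ∃ x ∈ P, (∀ j, S0 (x * pw z j)) ∧ ∃ j, Unq P (x * pw z j) := by
  classical
  have := Fintype.ofFinite G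
  by_contra hcon
  push Not at hcon
  have hz3' : z ^ 3 = 1 := by rw [← hz3]; exact pow_orderOf_eq_one z
  have hd := dc P S0 S0_conj S0_p3
  by_cases hex : ∃ t ∈ P, t ≠ 1 ∧ ¬ S0 t
  · obtain ⟨t, htP, ht1, ht0⟩ := hex
    have hg := gam_S0' (isPGroup_iff.mp P.2 t htP) ht1 ht0
    have key : 3 * (3 * cnt (fun y => S0 y ∧ Unq P y) + cnt (fun y => S0 y ∧ y ∈ P)) ≤
        8 * Nat.card P := by
      set W : G → ℕ := fun y => 3 * (if S0 y ∧ Unq P y then 1 else 0) +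
        if S0 y ∧ y ∈ P then 1 else 0 with hW
      have e1 : 3 * cnt (fun y => S0 y ∧ Unq P y) + cnt (fun y => S0 y ∧ y ∈ P) = ∑ y, W y := by
        rw [cnt_eq, cnt_eq, Finset.mul_sum, ← Finset.sum_add_distrib]
      have e2 : 3 * ∑ y, W y = ∑ y, ∑ j : Fin 3, W (y * pw z j) := by
        rw [Finset.sum_comm]
        have : ∀ j : Fin 3, ∑ y, W (y * pw z j) = ∑ y, W y := fun j =>
          Equiv.sum_comp (Equiv.mulRight (pw z j)) W
        simp [this]
      have e3 : 8 * Nat.card P = ∑ y : G, 8 * (if y ∈ P then 1 else 0) := by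
        rw [← Finset.mul_sum, ← cnt_eq]; rfl
      rw [e1, e2, e3]
      refine Finset.sum_le_sum fun y _ => ?_
      have hW4 : ∀ y, W y ≤ 4 := by
        intro y; simp only [hW]; split_ifs <;> omega
      have hW0 : ∀ y, ¬ S0 y → W y = 0 := by
        intro y hy; simp [hW, hy]
      by_cases hy : y ∈ P
      · simp only [hy, if_true]
        by_cases hall : ∀ j, S0 (y * pw z j)
        · have hW1 : ∀ j, W (y * pw z j) ≤ 1 := by
            intro j
            have := hcon y hy hall j
            simp only [hW, this, and_false, if_false]
            split_ifs <;> omega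
          have := Finset.sum_le_sum fun j (_ : j ∈ (Finset.univ : Finset (Fin 3))) => hW1 j
          simp at this
          omega
        · push Not at hall
          obtain ⟨j, hj⟩ := hall
          have h0 := hW0 _ hj
          rw [Fin.sum_univ_three]
          have a0 := hW4 (y * pw z 0)
          have a1 := hW4 (y * pw z 1)
          have a2 := hW4 (y * pw z 2)
          fin_cases j <;> simp at h0 <;> omega
      · have : ∀ j, W (y * pw z j) = 0 := by
          intro j
          have : y * pw z j ∉ P := fun h => hy (by
            have := mul_mem h (inv_mem (show pw z j ∈ P from pow_mem hz _))
            simpa using this)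
          have h2 : ¬ Unq P (y * pw z j) := fun h => this h.1
          simp [hW, this, h2]
        simp [this]
    have h7 := hyp.1
    rw [hG] at h7
    push_cast at h7
    have : (12 * cnt (S0 : G → Prop) : ℤ) ≤ 8 * Nat.card (Sylow 3 G) * Nat.card P := by
      have : 12 * cnt (S0 : G → Prop) ≤ 8 * Nat.card (Sylow 3 G) * Nat.card P := by
        calc _ = 3 * (4 * cnt (S0 : G → Prop)) := by ring
          _ ≤ 3 * _ := Nat.mul_le_mul_left 3 hd
          _ = Nat.card (Sylow 3 G) * (3 * (3 * cnt (fun y => S0 y ∧ Unq P y) + cnt (fun y => S0 y ∧ y ∈ P))) := by ring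
          _ ≤ Nat.card (Sylow 3 G) * (8 * Nat.card P) := Nat.mul_le_mul_left _ key
          _ = _ := by ring
      exact_mod_cast this
    have h36 : (36 : ℤ) ≤ Nat.card (Sylow 3 G) * Nat.card P := by
      have := Nat.mul_le_mul hn hP
      exact_mod_cast this
    nlinarith
  · push Not at hex
    have k1 : cnt (fun y => S0 y ∧ Unq P y) ≤ 2 := by
      have : cnt (fun y => S0 y ∧ Unq P y) ≤ cnt (fun y => y = z) + cnt (fun y => y = z⁻¹) := by
        refine le_trans (cnt_mono fun y hy => ?_) (cnt_or_le _ _)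
        by_contra hne
        push Not at hne
        refine hcon y hy.2.1 (fun j => hex _ (mul_mem hy.2.1 (pow_mem hz _)) ?_) 0 ?_
        · intro h1
          rw [mul_eq_one_iff_eq_inv, ← pw_neg hz3'] at h1
          have hj : ∀ i : Fin 3, i = 0 ∨ i = 1 ∨ i = -1 := by decide
          rcases hj (-j) with h | h | h <;> rw [h] at h1
          · rw [pw_zero] at h1
            rw [h1] at hy
            have := hy.1.1
            simp at this
          · rw [pw_one] at h1; exact hne.1 h1
          · rw [pw_neg hz3', pw_one] at h1; exact hne.2 h1
        · rw [pw_zero, mul_one]; exact hy.2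
      rw [cnt_eq_one, cnt_eq_one] at this
      exact this
    have k2 : cnt (fun y => S0 y ∧ y ∈ P) + 1 ≤ Nat.card P := by
      rw [← cnt_eq_one (1 : G)]
      have : Nat.card P = cnt (fun y : G => y ∈ P) := rfl
      rw [this, cnt_split (fun y => y ∈ P) (fun y => y = 1), add_comm]
      refine Nat.add_le_add ?_ ?_
      · exact cnt_mono fun y h => ⟨h ▸ one_mem P, h⟩
      · exact cnt_mono fun y h => ⟨h.2, fun h1 => by
          have := h.1.1
          rw [h1] at this
          simp at this⟩
    have h7 := hyp.1
    have hg := gam_S0 (G := G)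
    rw [hG] at h7
    push_cast at h7
    have : (4 * cnt (S0 : G → Prop) : ℤ) ≤ Nat.card (Sylow 3 G) * (Nat.card P + 5) := by
      have : 4 * cnt (S0 : G → Prop) ≤ Nat.card (Sylow 3 G) * (Nat.card P + 5) :=
        hd.trans (Nat.mul_le_mul_left _ (by omega))
      exact_mod_cast this
    have hn' : (4 : ℤ) ≤ Nat.card (Sylow 3 G) := by exact_mod_cast hn
    have hP' : (9 : ℤ) ≤ Nat.card P := by exact_mod_cast hP
    nlinarith [mul_le_mul_of_nonneg_left hP' (by linarith : (0 : ℤ) ≤ Nat.card (Sylow 3 G))]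

theorem caseB_false {P : Sylow 3 G} {z : G} (hz : z ∈ P) (hzc : ∀ p ∈ P, Commute p z)
    (hz3 : orderOf z = 3) (hG : Nat.card G = 2 * Nat.card (Sylow 3 G) * Nat.card P)
    (hN : Nat.card (normalizer (P : Set G)) = 2 * Nat.card P)
    (hn : 4 ≤ Nat.card (Sylow 3 G)) (hP : 9 ≤ Nat.card P)
    (hzn : ∃ Q : Sylow 3 G, z ∉ Q) (hyp : Hyp G) : False := by
  obtain ⟨x, hx, hS, j0, hj0⟩ := hypB hz hz3 hG hn hP hyp
  have hz3' : z ^ 3 = 1 := by rw [← hz3]; exact pow_orderOf_eq_one z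
  have hc : CaseB P (x * pw z j0) z := by
    have hmul : ∀ j, x * pw z j0 * pw z j = x * pw z (j0 + j) := by
      intro j; rw [pw_add hz3', mul_assoc]
    refine ⟨hz, hzc, hz3', ?_, hj0.1, ?_, ?_, ?_⟩
    · rintro rfl; simp at hz3
    · rw [← (hS j0).1]; exact pow_orderOf_eq_one _
    · intro j
      refine b2 hj0 (fun p hp => (hzc p hp).pow_right _) (pow_mem hz _) ?_
      rw [hmul]; exact (hS _).2
    · intro j
      rw [hmul]; exact (hS _).2
  have h4 := hc.b4
  have hL := LL_bound hz hz3'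
  have hf := wsum_ff_le (G := G)
  have h7 := hyp.2
  rw [hG] at h7 h4
  rw [hN] at h4
  push_cast at h7
  have hm : (mm z = 1 ∧ 10 ≤ Nat.card (Sylow 3 G)) ∨
      (4 ≤ mm z ∧ 4 * mm z ≤ Nat.card (Sylow 3 G)) := by
    by_cases h1 : mm z = 1
    · exact Or.inl ⟨h1, hc.ten h1 (by omega)⟩
    · exact Or.inr ⟨mm_ge_four hz (fun h => h1 ((unq_iff hz).mp h)), bs hz3' hzn⟩
  generalize cnt (fun y : G => y ^ 3 = 1) = T at *
  generalize cnt (fun y : G => orderOf y = 2) = J at *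
  generalize cnt (LL P z) = L at *
  generalize Nat.card (Sylow 3 G) = n at *
  generalize Nat.card P = p at *
  generalize mm z = m at *
  generalize wsum ff G = F at *
  zify at *
  have key : 2118 * (n * p : ℤ) ≤ 18000 + 6000 * p + 6000 * (m * p) := by linarith
  have key2 : p * (2118 * n : ℤ) ≤ p * (8000 + 6000 * m) := by nlinarith
  have key3 : (2118 * n : ℤ) ≤ 8000 + 6000 * m := le_of_mul_le_mul_left key2 (by linarith)
  rcases hm with ⟨h1, h2⟩ | ⟨h1, h2⟩ <;> linarith

end s
end FI


namespace FI

set_option linter.unusedSectionVars false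

open Subgroup

section t
variable {G : Type*} [Group G] [Finite G]

theorem transfer_unq {A : Type*} [CommGroup A] {P : Sylow 3 G} (ϕ : (P : Subgroup G) →* A)
    (hN : ∀ g : G, g • P = P → g ∈ P) {x : G} (hx : Unq P x) (hx3 : x ^ 3 = 1) :
    MonoidHom.transfer ϕ x = ϕ ⟨x, hx.1⟩ := by
  classical
  have := Fintype.ofFinite
    (Quotient (MulAction.orbitRel (zpowers x) (G ⧸ (P : Subgroup G))))
  rw [MonoidHom.transfer_eq_prod_quotient_orbitRel_zpowers_quot]
  set o : G ⧸ (P : Subgroup G) := QuotientGroup.mk 1 with ho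
  set q0 : Quotient (MulAction.orbitRel (zpowers x) (G ⧸ (P : Subgroup G))) :=
    Quotient.mk _ o with hq0
  have hfix : x • o = o := by
    show (QuotientGroup.mk (x * 1) : G ⧸ (P : Subgroup G)) = QuotientGroup.mk 1
    rw [QuotientGroup.eq]
    have hx1 : x ∈ (P : Subgroup G) := hx.1
    simpa using hx1
  have hout : q0.out = o := by
    have h1 : (MulAction.orbitRel (zpowers x) (G ⧸ (P : Subgroup G))) q0.out o :=
      Quotient.mk_out o
    rw [MulAction.orbitRel_apply, MulAction.mem_orbit_iff] at h1
    obtain ⟨⟨y, hy⟩, h2⟩ := h1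
    rw [← h2]
    have : zpowers x ≤ MulAction.stabilizer G o := by
      rw [zpowers_le]; exact hfix
    exact this hy
  have hsingle : ∀ q : Quotient (MulAction.orbitRel (zpowers x) (G ⧸ (P : Subgroup G))),
      x • q.out = q.out → q = q0 := by
    intro q hq
    have h1 : q.out.out ∈ P := by
      apply hN
      apply hx.2
      rw [mem_smul_iff]
      have h2 : (QuotientGroup.mk (x * q.out.out) : G ⧸ (P : Subgroup G)) =
          QuotientGroup.mk q.out.out := by
        have h3 : (QuotientGroup.mk q.out.out : G ⧸ (P : Subgroup G)) = q.out :=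
          QuotientGroup.out_eq' _
        have h4 : (QuotientGroup.mk (x * q.out.out) : G ⧸ (P : Subgroup G)) =
          x • (QuotientGroup.mk q.out.out : G ⧸ (P : Subgroup G)) := rfl
        rw [h4, h3, hq]
      have h5 := QuotientGroup.eq.mp h2.symm
      rw [mul_assoc]
      exact h5
    have h2 : q.out = o := by
      rw [← QuotientGroup.out_eq' q.out, ho]
      rw [QuotientGroup.eq]
      have h1' : q.out.out ∈ (P : Subgroup G) := h1
      simpa using inv_mem h1'
    rw [← Quotient.out_eq q, h2]
  have hper : ∀ q : Quotient (MulAction.orbitRel (zpowers x) (G ⧸ (P : Subgroup G))),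
      q ≠ q0 → Function.minimalPeriod (x • ·) q.out = 3 := by
    intro q hq
    have h3 : Function.IsPeriodicPt (x • ·) 3 q.out := by
      show (x • ·)^[3] q.out = q.out
      rw [smul_iterate, hx3]
      exact one_smul G q.out
    have := h3.minimalPeriod_dvd
    rcases (Nat.dvd_prime Nat.prime_three).mp this with h | h
    · exfalso
      apply hq
      apply hsingle
      exact Function.minimalPeriod_eq_one_iff_isFixedPt.mp h
    · exact h
  rw [Fintype.prod_eq_single q0]
  · have h1 : Function.minimalPeriod (x • ·) q0.out = 1 := by
      rw [Function.minimalPeriod_eq_one_iff_isFixedPt, hout]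
      exact hfix
    have h2 : q0.out.out ∈ (P : Subgroup G) := by
      have h3 : (QuotientGroup.mk q0.out.out : G ⧸ (P : Subgroup G)) = QuotientGroup.mk 1 := by
        rw [QuotientGroup.out_eq', hout]
      have := QuotientGroup.eq.mp h3
      simpa using inv_mem this
    have h4 : (⟨q0.out.out⁻¹ * x ^ Function.minimalPeriod (x • ·) q0.out * q0.out.out,
            QuotientGroup.out_conj_pow_minimalPeriod_mem (P : Subgroup G) x q0.out⟩ :
              (P : Subgroup G)) = (⟨q0.out.out, h2⟩ : (P : Subgroup G))⁻¹ * ⟨x, hx.1⟩ *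
                ⟨q0.out.out, h2⟩ := by
      apply Subtype.ext
      simp [h1]
    rw [h4, map_mul, map_mul, map_inv, mul_comm, mul_inv_cancel_left]
  · intro q hq
    have h4 : (⟨q.out.out⁻¹ * x ^ Function.minimalPeriod (x • ·) q.out * q.out.out,
            QuotientGroup.out_conj_pow_minimalPeriod_mem (P : Subgroup G) x q.out⟩ :
              (P : Subgroup G)) = 1 := by
      apply Subtype.ext
      simp [hper q hq, hx3]
    rw [h4, map_one]

end t

section q

/-- a 3-group of order at least 9 has a normal subgroup of index 9 -/
theorem exists_normal_index_nine : ∀ (k : ℕ) (P : Type _) [Group P] [Finite P],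
    Nat.card P = 3 ^ (k + 2) → ∃ N : Subgroup P, N.Normal ∧ N.index = 9 := by
  intro k
  induction k with
  | zero =>
    intro P _ _ h
    exact ⟨⊥, inferInstance, by rw [index_bot, h]; rfl⟩
  | succ k ih =>
    intro P _ _ h
    have : Fact (Nat.Prime 3) := ⟨Nat.prime_three⟩
    have hP : IsPGroup 3 P := IsPGroup.of_card h
    have hnt : Nontrivial P := by
      rw [← Finite.one_lt_card_iff_nontrivial, h]
      exact Nat.one_lt_pow (by omega) (by norm_num)
    have hc : Nontrivial (center P) := hP.center_nontrivial
    have hcP : IsPGroup 3 (center P) := hP.to_subgroup _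
    have hd : 3 ∣ Nat.card (center P) := by
      obtain ⟨m, hm, hm'⟩ := hcP.nontrivial_iff_card.mp hc
      rw [hm']; exact dvd_pow_self 3 (by omega)
    obtain ⟨c, hc3⟩ := exists_prime_orderOf_dvd_card' 3 hd
    set Z := zpowers (c : P) with hZ
    have hZn : Z.Normal := by
      constructor
      intro n hn g
      have : n ∈ center P := (zpowers_le.mpr c.2) hn
      rw [mem_center_iff.mp this g, mul_inv_cancel_right]
      exact hn
    have hZc : Nat.card Z = 3 := by
      rw [hZ, Nat.card_zpowers, orderOf_coe, hc3]
    have hq : Nat.card (P ⧸ Z) = 3 ^ (k + 2) := by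
      have := Subgroup.card_eq_card_quotient_mul_card_subgroup Z
      rw [h, hZc, show k + 1 + 2 = (k + 2) + 1 from rfl, pow_succ] at this
      omega
    obtain ⟨N, hN, hi⟩ := ih (P ⧸ Z) hq
    refine ⟨N.comap (QuotientGroup.mk' Z), inferInstance, ?_⟩
    rw [index_comap_of_surjective _ (QuotientGroup.mk'_surjective Z), hi]

theorem nine_comm {P : Type*} [Group P] [Finite P] (hP : IsPGroup 3 P) (h9 : 9 ≤ Nat.card P) :
    9 * Nat.card (commutator P) ≤ Nat.card P := by
  have : Fact (Nat.Prime 3) := ⟨Nat.prime_three⟩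
  obtain ⟨m, hm⟩ := IsPGroup.iff_card.mp hP
  have hm2 : ∃ k, m = k + 2 := by
    match m with
    | 0 => rw [hm] at h9; norm_num at h9
    | 1 => rw [hm] at h9; norm_num at h9
    | k + 2 => exact ⟨k, rfl⟩
  obtain ⟨k, rfl⟩ := hm2
  obtain ⟨N, hN, hi⟩ := exists_normal_index_nine k P hm
  have hcomm : ∀ a b : P ⧸ N, a * b = b * a := by
    have : Nat.card (P ⧸ N) = 3 ^ 2 := hi
    exact (IsPGroup.commutative_of_card_eq_prime_sq this)
  have hle : commutator P ≤ N := by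
    rw [commutator_eq_closure, closure_le]
    rintro _ ⟨a, b, rfl⟩
    rw [SetLike.mem_coe, ← QuotientGroup.eq_one_iff]
    have := hcomm a b
    rw [commutatorElement_def, QuotientGroup.mk_mul, QuotientGroup.mk_mul, QuotientGroup.mk_mul,
      QuotientGroup.mk_inv, QuotientGroup.mk_inv, this]
    group
  have h1 := Subgroup.card_mul_index N
  rw [hi] at h1
  have := Subgroup.card_le_of_le hle
  omega

end q
end FI


namespace FI

set_option linter.unusedSectionVars false

open Subgroup

section f

theorem solvable_of_commute_conj : ∀ (n : ℕ) (G : Type _) [Group G] [Finite G], Nat.card G ≤ n →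
    (∀ a b : G, Commute a (b * a * b⁻¹)) → Group.IsSolvable G := by
  intro n
  induction n with
  | zero =>
    intro G _ _ h
    have : 0 < Nat.card G := Nat.card_pos
    omega
  | succ n ih =>
    intro G _ _ h hc
    by_cases hs : Subsingleton G
    · infer_instance
    have hnt : Nontrivial G := not_subsingleton_iff_nontrivial.mp hs
    obtain ⟨a, ha⟩ := exists_ne (1 : G)
    set N := normalClosure ({a} : Set G) with hN
    have haN : a ∈ N := subset_normalClosure rfl
    have h1 : Nat.card (G ⧸ N) ≤ n := by
      have h2 := Subgroup.card_eq_card_quotient_mul_card_subgroup N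
      have h3 : 1 < Nat.card N := by
        rw [Finite.one_lt_card_iff_nontrivial]
        exact ⟨⟨a, haN⟩, 1, fun hh => ha (congrArg Subtype.val hh)⟩
      have h4 : 0 < Nat.card (G ⧸ N) := Nat.card_pos
      nlinarith
    have h2 : Group.IsSolvable (G ⧸ N) := by
      refine ih (G ⧸ N) h1 fun x y => ?_
      obtain ⟨x, rfl⟩ := QuotientGroup.mk_surjective x
      obtain ⟨y, rfl⟩ := QuotientGroup.mk_surjective y
      exact (hc x y).map (QuotientGroup.mk' N)
    have h3 : Group.IsSolvable N := by
      apply Group.isSolvable_of_comm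
      have hcc : ∀ x ∈ Group.conjugatesOfSet ({a} : Set G),
          ∀ y ∈ Group.conjugatesOfSet ({a} : Set G), x * y = y * x := by
        intro x hx y hy
        rw [Group.mem_conjugatesOfSet_iff] at hx hy
        obtain ⟨b, rfl, hb⟩ := hx
        obtain ⟨b', hb', hb2⟩ := hy
        rw [Set.mem_singleton_iff] at hb'
        subst hb'
        have : IsConj x y := hb.symm.trans hb2
        obtain ⟨c, rfl⟩ := isConj_iff.mp this
        exact hc x c
      intro x y
      apply Subtype.ext
      have hle : N ≤ centralizer (N : Set G) := by
        rw [hN]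
        unfold normalClosure
        rw [← le_centralizer_iff, closure_le]
        intro x hx
        rw [SetLike.mem_coe, mem_centralizer_iff]
        intro y hy
        have : closure (Group.conjugatesOfSet ({a} : Set G)) ≤ centralizer {x} := by
          rw [closure_le]
          intro y hy
          rw [SetLike.mem_coe, mem_centralizer_singleton_iff]
          exact hcc y hy x hx
        exact mem_centralizer_singleton_iff.mp (this hy)
      exact (mem_centralizer_iff.mp (hle y.2) x x.2)
    exact (Group.isSolvable_iff_subgroup_quotient N).mpr ⟨h3, h2⟩

variable {G : Type*} [Group G] [Finite G]

theorem solvable_of_cubes {K : Subgroup G} [K.Normal] {x : G} (h : ∀ k ∈ K, (k * x) ^ 3 = 1) :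
    Group.IsSolvable K := by
  have key : ∀ k ∈ K, ∀ a ∈ K, a * ((k * x) * a * (k * x)⁻¹) * ((k * x)⁻¹ * a * (k * x)) = 1 ∧
      Commute a ((k * x) * a * (k * x)⁻¹) ∧ Commute a ((k * x)⁻¹ * a * (k * x)) := by
    intro k hk a ha
    have h1 : (a * (k * x)) ^ 3 = 1 := by rw [← mul_assoc]; exact h _ (mul_mem ha hk)
    have h2 : (a * (k * x)⁻¹) ^ 3 = 1 := by
      have e : a * (k * x)⁻¹ = ((k * (x * a⁻¹ * x⁻¹)) * x)⁻¹ := by group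
      rw [e, inv_pow, h _ (mul_mem hk (Normal.conj_mem inferInstance _ (inv_mem ha) x)), inv_one]
    obtain ⟨a1, a2, a3, -⟩ := comm3 (h k hk) h1 h2
    exact ⟨a1, a2, a3⟩
  refine solvable_of_commute_conj _ K le_rfl ?_
  rintro ⟨a, ha⟩ ⟨b, hb⟩
  apply Subtype.ext
  show a * (b * a * b⁻¹) = (b * a * b⁻¹) * a
  obtain ⟨e1, -, -⟩ := key 1 (one_mem K) a ha
  rw [one_mul] at e1
  have c1 := (key b hb a ha).2.1
  have hk : x * b⁻¹ * x⁻¹ ∈ K := Normal.conj_mem inferInstance _ (inv_mem hb) x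
  have c2 := (key _ hk a ha).2.2
  have e2 : b * a * b⁻¹ = ((b * x) * a * (b * x)⁻¹ *
      ((x * b⁻¹ * x⁻¹ * x)⁻¹ * a * (x * b⁻¹ * x⁻¹ * x)))⁻¹ := by
    have e3 : a = ((x * a * x⁻¹) * (x⁻¹ * a * x))⁻¹ := by
      rw [eq_inv_iff_mul_eq_one, ← mul_assoc]; exact e1
    calc b * a * b⁻¹ = b * ((x * a * x⁻¹) * (x⁻¹ * a * x))⁻¹ * b⁻¹ := by rw [← e3]
      _ = _ := by group
  rw [e2]
  exact ((c1.mul_right c2).inv_right).eq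

end f
end FI


namespace FI

set_option linter.unusedSectionVars false

open Subgroup

section a
variable {G : Type*} [Group G] [Finite G]

theorem gam_anti {d n : ℕ} (hn : 0 < n) (h : d ∣ n) : gam n ≤ gam d := by
  have h1 := Nat.le_of_dvd hn h
  have hd := Nat.pos_of_dvd_of_pos h hn
  have h2 : d = 2 → n = 2 ∨ 4 ≤ n := by rintro rfl; omega
  unfold gam
  split_ifs <;> omega

theorem ff_anti {d n : ℕ} (hn : 0 < n) (h : d ∣ n) : ff n ≤ ff d := by
  have h1 := Nat.le_of_dvd hn h
  have hd := Nat.pos_of_dvd_of_pos h hn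
  have h2 : d = 2 → n = 2 ∨ 4 ≤ n := by rintro rfl; omega
  unfold ff
  split_ifs <;> omega

theorem wsum_quot (N : Subgroup G) [N.Normal] {w : ℕ → ℤ}
    (hw : ∀ d n : ℕ, 0 < n → d ∣ n → w n ≤ w d) :
    wsum w G ≤ Nat.card N * wsum w (G ⧸ N) := by
  classical
  have := Fintype.ofFinite G
  have := Fintype.ofFinite (G ⧸ N)
  rw [wsum_eq, wsum_eq]
  calc ∑ y : G, w (orderOf y) ≤ ∑ y : G, w (orderOf (QuotientGroup.mk y : G ⧸ N)) := by
        refine Finset.sum_le_sum fun y _ => hw _ _ (orderOf_pos y) ?_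
        exact orderOf_map_dvd (QuotientGroup.mk' N) y
    _ = ∑ q : G ⧸ N, ∑ y : G with (QuotientGroup.mk y : G ⧸ N) = q, w (orderOf q) := by
        rw [← Finset.sum_fiberwise Finset.univ (fun y : G => (QuotientGroup.mk y : G ⧸ N))]
        refine Finset.sum_congr rfl fun q _ => Finset.sum_congr rfl fun y hy => ?_
        rw [(Finset.mem_filter.mp hy).2]
    _ = _ := by
        rw [Finset.mul_sum]
        refine Finset.sum_congr rfl fun q _ => ?_
        rw [Finset.sum_const, nsmul_eq_mul]
        congr 2
        rw [← Fintype.card_subtype, ← Nat.card_eq_fintype_card]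
        obtain ⟨x, rfl⟩ := QuotientGroup.mk_surjective q
        apply Nat.card_congr
        refine ⟨fun y => ⟨x⁻¹ * y.1, ?_⟩, fun k => ⟨x * k.1, ?_⟩, ?_, ?_⟩
        · exact QuotientGroup.eq.mp y.2.symm
        · rw [QuotientGroup.mk_mul, (QuotientGroup.eq_one_iff _).mpr k.2, mul_one]
        · intro y; simp
        · intro y; simp

theorem Hyp.quot (h : Hyp G) (N : Subgroup G) [N.Normal] : Hyp (G ⧸ N) := by
  have h1 := wsum_quot N (fun d n => gam_anti (d := d) (n := n))
  have h2 := wsum_quot N (fun d n => ff_anti (d := d) (n := n))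
  have h3 : (Nat.card G : ℤ) = Nat.card (G ⧸ N) * Nat.card N := by
    exact_mod_cast Subgroup.card_eq_card_quotient_mul_card_subgroup N
  obtain ⟨a, b⟩ := h
  rw [h3] at a b
  have hp : (0 : ℤ) < Nat.card N := by exact_mod_cast Nat.card_pos
  constructor
  · refine le_of_mul_le_mul_left ?_ hp
    linarith
  · refine le_of_mul_le_mul_left ?_ hp
    linarith

/-- subgroup generated by the elements of order coprime to 3 -/
def K3 (G : Type*) [Group G] : Subgroup G := closure {g : G | (orderOf g).Coprime 3}

theorem K3_le_ker {A : Type*} [Group A] (hA : IsPGroup 3 A) (f : G →* A) : K3 G ≤ f.ker := by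
  unfold K3
  rw [closure_le]
  intro g hg
  rw [SetLike.mem_coe, MonoidHom.mem_ker]
  obtain ⟨k, hk⟩ := hA (f g)
  have h1 := orderOf_dvd_of_pow_eq_one hk
  have h2 := orderOf_map_dvd f g
  have h3 : (orderOf g).Coprime (3 ^ k) := Nat.Coprime.pow_right k hg
  have h4 := Nat.dvd_gcd h2 h1
  rw [h3] at h4
  exact orderOf_eq_one_iff.mp (Nat.dvd_one.mp h4)

theorem K3_quot (N : Subgroup G) [N.Normal] (h : K3 G = ⊤) : K3 (G ⧸ N) = ⊤ := by
  rw [eq_top_iff]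
  have h1 : map (QuotientGroup.mk' N) (K3 G) ≤ K3 (G ⧸ N) := by
    unfold K3
    rw [MonoidHom.map_closure]
    apply Subgroup.closure_mono
    rintro _ ⟨g, hg, rfl⟩
    exact Nat.Coprime.coprime_dvd_left (orderOf_map_dvd _ g) hg
  rw [h, ← MonoidHom.range_eq_map, QuotientGroup.range_mk'] at h1
  exact h1

theorem IsPGroup.solv {p : ℕ} [Fact p.Prime] {A : Type*} [Group A] [Finite A] (h : IsPGroup p A) :
    Group.IsSolvable A := by
  have := h.isNilpotent
  infer_instance

theorem cnt_S_le (P : Sylow 3 G) :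
    cnt (fun y : G => orderOf y = 3 ∧ y ∈ P) + 1 ≤ Nat.card P := by
  rw [← cnt_eq_one (1 : G)]
  have : Nat.card P = cnt (fun y : G => y ∈ P) := rfl
  rw [this, cnt_split (fun y => y ∈ P) (fun y => y = 1), add_comm]
  refine Nat.add_le_add ?_ ?_
  · exact cnt_mono fun y h => ⟨h ▸ one_mem P, h⟩
  · exact cnt_mono fun y h => ⟨h.2, fun h1 => by
      have := h.1
      rw [h1] at this
      simp at this⟩

theorem ord3_conj (g y : G) (h : orderOf y = 3) : orderOf (g * y * g⁻¹) = 3 := by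
  rw [← h]
  exact orderOf_injective (MulAut.conj g).toMonoidHom (MulAut.conj g).injective y

theorem ord3_p3 (y : G) (h : orderOf y = 3) : P3 y :=
  ⟨1, by rw [pow_one, ← h]; exact pow_orderOf_eq_one y⟩

theorem unq_of_card_three {P : Sylow 3 G} (hP : Nat.card P = 3) {y : G} (hy : y ∈ P)
    (h : y ≠ 1) : Unq P y := by
  refine ⟨hy, fun Q hQ => ?_⟩
  have key : ∀ R : Sylow 3 G, y ∈ R → (R : Subgroup G) = zpowers y := by
    intro R hR
    symm
    apply Subgroup.eq_of_le_of_card_ge (zpowers_le.mpr hR)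
    rw [card_sylow_eq R P, hP, Nat.card_zpowers]
    have h1 : orderOf y ∣ 3 := by
      have h4 : Nat.card (R : Subgroup G) = 3 := (card_sylow_eq R P).trans hP
      have h3 := orderOf_dvd_natCard (⟨y, hR⟩ : (R : Subgroup G))
      rwa [orderOf_mk, h4] at h3
    rcases (Nat.dvd_prime Nat.prime_three).mp h1 with h2 | h2
    · exact absurd (orderOf_eq_one_iff.mp h2) h
    · exact h2.ge
  apply Sylow.ext
  rw [key Q hQ, key P hy]

/-- Case A -/
theorem caseA_false (hK : K3 G = ⊤) (hyp : Hyp G) (P : Sylow 3 G) (hn : 4 ≤ Nat.card (Sylow 3 G))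
    (hN : ∀ g : G, g • P = P → g ∈ P) (hG : Nat.card G = Nat.card (Sylow 3 G) * Nat.card P)
    (hP : Nat.card P = 3 ∨ 9 ≤ Nat.card P) : False := by
  have hPP : IsPGroup 3 (P : Subgroup G) := P.2
  have hAb : IsPGroup 3 (Abelianization (P : Subgroup G)) := hPP.to_quotient _
  have hmem : ∀ (x : G) (hx : Unq P x), x ^ 3 = 1 →
      (⟨x, hx.1⟩ : (P : Subgroup G)) ∈ commutator (P : Subgroup G) := by
    intro x hx hx3
    rw [← Abelianization.ker_of, MonoidHom.mem_ker, ← transfer_unq Abelianization.of hN hx hx3]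
    have h1 := K3_le_ker hAb (MonoidHom.transfer (Abelianization.of (G := (P : Subgroup G))))
    rw [hK] at h1
    exact h1 (mem_top x)
  rcases hP with hP | hP
  · have h3 : Nat.card (P : Subgroup G) = 3 := hP
    have hcyc : IsCyclic (P : Subgroup G) := isCyclic_of_prime_card h3
    have hnt : Nontrivial (P : Subgroup G) := by
      rw [← Finite.one_lt_card_iff_nontrivial, h3]; norm_num
    obtain ⟨⟨x, hx⟩, hx1⟩ := exists_ne (1 : (P : Subgroup G))
    have hx1' : x ≠ 1 := fun h => hx1 (Subtype.ext h)
    have hu := unq_of_card_three hP hx hx1'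
    have hx3 : x ^ 3 = 1 := by
      have this := pow_card_eq_one' (x := (⟨x, hx⟩ : (P : Subgroup G)))
      rw [h3] at this
      exact congrArg Subtype.val this
    have h4 := hmem x hu hx3
    have h5 : commutator (P : Subgroup G) = ⊥ := by
      rw [commutator_eq_bot_iff_center_eq_top, eq_top_iff]
      intro a _
      rw [mem_center_iff]
      intro b
      exact (IsCyclic.commGroup (α := (P : Subgroup G))).mul_comm b a
    rw [h5, mem_bot] at h4
    exact hx1 h4
  · have hd := dc P (fun y => orderOf y = 3) ord3_conj ord3_p3
    have h9 := nine_comm hPP hP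
    have h1 : cnt (fun y : G => orderOf y = 3 ∧ Unq P y) + 1 ≤ Nat.card (commutator (P : Subgroup G)) := by
      have e : Nat.card (commutator (P : Subgroup G)) =
          cnt (fun y : (P : Subgroup G) => y ∈ commutator (P : Subgroup G)) := rfl
      rw [e, cnt_split (fun y : (P : Subgroup G) => y ∈ commutator (P : Subgroup G)) (fun y => y = 1),
        add_comm]
      refine Nat.add_le_add ?_ ?_
      · exact cnt_pos (y := 1) ⟨one_mem _, rfl⟩
      · classical
        refine cnt_le_inj (fun y : G => if h : y ∈ P then (⟨y, h⟩ : (P : Subgroup G)) else 1) ?_ ?_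
        · rintro y ⟨h3, hu⟩
          have hyP := hu.1
          simp only [hyP, dif_pos]
          refine ⟨hmem y hu (by rw [← h3]; exact pow_orderOf_eq_one y), ?_⟩
          intro hh
          have : y = 1 := congrArg Subtype.val hh
          rw [this] at h3
          simp at h3
        · rintro a b ⟨-, ha⟩ ⟨-, hb⟩ hab
          simp only [ha.1, hb.1, dif_pos] at hab
          exact congrArg Subtype.val hab
    have h2 := cnt_S_le P
    have h3 := wsum_gam_le (G := G)
    have h7 := hyp.1
    rw [hG] at h7
    push_cast at h7
    have h9' : 9 * Nat.card (commutator (P : Subgroup G)) ≤ Nat.card P := h9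
    have : 12 * cnt (fun y : G => orderOf y = 3) + 12 * Nat.card (Sylow 3 G) ≤
        4 * Nat.card (Sylow 3 G) * Nat.card P := by
      calc _ = 3 * (4 * cnt (fun y : G => orderOf y = 3)) + 12 * Nat.card (Sylow 3 G) := by ring
        _ ≤ 3 * _ + 12 * Nat.card (Sylow 3 G) := Nat.add_le_add_right (Nat.mul_le_mul_left 3 hd) _
        _ = Nat.card (Sylow 3 G) * (3 * (3 * cnt (fun y => orderOf y = 3 ∧ Unq P y) +
              cnt (fun y => orderOf y = 3 ∧ y ∈ P)) + 12) := by ring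
        _ ≤ Nat.card (Sylow 3 G) * (4 * Nat.card P) := Nat.mul_le_mul_left _ (by omega)
        _ = _ := by ring
    clear hd h1 h2 h9 h9' hG
    generalize cnt (fun y : G => orderOf y = 3) = s at *
    generalize Nat.card (Sylow 3 G) = n at *
    generalize Nat.card P = p at *
    zify at this hn hP
    nlinarith [mul_le_mul_of_nonneg_left hP (by linarith : (0 : ℤ) ≤ n)]

/-- a second bound -/
theorem wsum_gam_le' : wsum gam G ≤
    3 + cnt (fun y : G => orderOf y = 3) - cnt (fun y : G => orderOf y = 5) := by
  classical
  have := Fintype.ofFinite G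
  have h1 : (cnt (fun y : G => y = 1) : ℤ) = 1 := by rw [cnt_eq_one]; rfl
  have : (3 : ℤ) = 3 * cnt (fun y : G => y = 1) := by rw [h1]; rfl
  rw [this, wsum_eq, cnt_int, cnt_int, cnt_int, Finset.mul_sum,
    ← Finset.sum_add_distrib, ← Finset.sum_sub_distrib]
  refine Finset.sum_le_sum fun y _ => ?_
  unfold gam
  have hp := orderOf_pos y
  have ho : y = 1 ↔ orderOf y = 1 := orderOf_eq_one_iff.symm
  simp only [ho]
  generalize orderOf y = n at *
  split_ifs <;> omega

theorem small_false (hns : ∀ N : Subgroup G, N.Normal → Group.IsSolvable N → N = ⊥)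
    (hyp : Hyp G) (P : Sylow 3 G) (hn : 4 ≤ Nat.card (Sylow 3 G))
    (hG : Nat.card G = 2 * Nat.card (Sylow 3 G) * Nat.card P)
    (hP : Nat.card P = 3) : False := by
  have hS : cnt (fun y : G => orderOf y = 3) ≤ Nat.card (Sylow 3 G) * 2 := by
    refine (dc_mm P _ ord3_conj ord3_p3).trans (Nat.mul_le_mul_left _ ?_)
    have := cnt_S_le P
    omega
  have h7 := hyp.1
  rw [hG, hP] at h7
  push_cast at h7
  have hord : ∀ y : G, orderOf y ≤ 4 := by
    intro y
    by_contra hy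
    by_cases h6 : 6 ≤ orderOf y
    · have h2 : 2 ≤ cnt (fun y : G => 6 ≤ orderOf y) :=
        cnt_two (a := y) (b := y⁻¹) h6 (by rw [orderOf_inv]; exact h6) (ne_inv_of (by omega))
      have := wsum_gam_le (G := G)
      omega
    · have h5 : orderOf y = 5 := by omega
      have h4 : 4 ≤ cnt (fun y : G => orderOf y = 5) := by
        have hc : Nat.card (Fin 4) = 4 := by simp
        rw [← hc, ← cnt_true]
        refine cnt_le_inj (fun i : Fin 4 => y ^ ((i : ℕ) + 1)) ?_ ?_
        · intro i _
          rw [Nat.Coprime.orderOf_pow, h5]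
          rw [h5]
          revert i; decide
        · intro a b _ _ hab
          have := pow_injOn_Iio_orderOf (x := y) (by rw [h5]; have := a.2; simp; omega)
            (by rw [h5]; have := b.2; simp; omega) hab
          apply Fin.ext
          omega
      have := wsum_gam_le' (G := G)
      omega
  have hprime : ∀ p : ℕ, p.Prime → p ∣ Nat.card G → p = 2 ∨ p = 3 := by
    intro p hp hd
    have : Fact p.Prime := ⟨hp⟩
    obtain ⟨y, hy⟩ := exists_prime_orderOf_dvd_card' p hd
    have h4 := hord y
    rw [hy] at h4
    have h2 := hp.two_le
    have : p ≠ 4 := by rintro rfl; revert hp; decide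
    omega
  obtain ⟨T⟩ : Nonempty (Sylow 2 G) := inferInstance
  have hi : (T : Subgroup G).index ∣ 3 := by
    have hnd : ¬ 2 ∣ (T : Subgroup G).index := T.not_dvd_index
    have hne : (T : Subgroup G).index ≠ 0 := FiniteIndex.index_ne_zero
    have hpow := Nat.eq_prime_pow_of_unique_prime_dvd (p := 3) hne (by
      intro d hd hdi
      rcases hprime d hd (hdi.trans (Subgroup.index_dvd_card _)) with h | h
      · rw [h] at hdi; exact absurd hdi hnd
      · exact h)
    have h1 : (T : Subgroup G).index ∣ Nat.card P * (P : Subgroup G).index := by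
      rw [Subgroup.card_mul_index]; exact Subgroup.index_dvd_card _
    rw [hP] at h1
    refine Nat.Coprime.dvd_of_dvd_mul_right ?_ h1
    rw [hpow]
    apply Nat.Coprime.pow_left
    exact (Nat.Prime.coprime_iff_not_dvd Nat.prime_three).mpr P.not_dvd_index
  have hi3 : (T : Subgroup G).index ≤ 3 := Nat.le_of_dvd (by norm_num) hi
  have hcore : (T : Subgroup G).normalCore = ⊥ := by
    apply hns _ inferInstance
    exact IsPGroup.solv (T.2.to_le (normalCore_le _))
  rw [normalCore_eq_ker] at hcore
  have hinj := (MonoidHom.ker_eq_bot_iff _).mp hcore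
  have h1 := Nat.card_le_card_of_injective _ hinj
  rw [Nat.card_perm] at h1
  have h2 : Nat.factorial (Nat.card (G ⧸ (T : Subgroup G))) ≤ Nat.factorial 3 :=
    Nat.factorial_le hi3
  have h3 : Nat.factorial 3 = 6 := rfl
  rw [hP] at hG
  omega

theorem T2_aux (hK : K3 G = ⊤) (hyp : Hyp G)
    (hns : ∀ N : Subgroup G, N.Normal → Group.IsSolvable N → N = ⊥) : Group.IsSolvable G := by
  obtain ⟨P⟩ : Nonempty (Sylow 3 G) := inferInstance
  have hpcard : ∃ m, Nat.card (P : Subgroup G) = 3 ^ m := IsPGroup.iff_card.mp P.2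
  have hmod : Nat.card (Sylow 3 G) % 3 = 1 := card_sylow_modEq_one 3 G
  by_cases hn1 : Nat.card (Sylow 3 G) = 1
  · have hsub : Subsingleton (Sylow 3 G) := (Nat.card_eq_one_iff_unique.mp hn1).1
    have hbot : (P : Subgroup G) = ⊥ := hns _ (P.normal_of_subsingleton) (IsPGroup.solv P.2)
    have h3 : ¬ 3 ∣ Nat.card G := by
      have := P.not_dvd_index
      rwa [hbot, index_bot] at this
    have hS : cnt (fun y : G => orderOf y = 3) = 0 := by
      by_contra h
      have : 0 < cnt (fun y : G => orderOf y = 3) := Nat.pos_of_ne_zero h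
      unfold cnt at this
      obtain ⟨⟨y, hy⟩⟩ := (Nat.card_pos_iff.mp this).1
      exact h3 (hy ▸ orderOf_dvd_natCard y)
    have h1 := wsum_gam_le (G := G)
    have h7 := hyp.1
    have hle : Nat.card G ≤ 8 := by omega
    have hpos : 0 < Nat.card G := Nat.card_pos
    have hpp : ∃ p k : ℕ, p.Prime ∧ Nat.card G = p ^ k := by
      have h : Nat.card G = 1 ∨ Nat.card G = 2 ∨ Nat.card G = 4 ∨ Nat.card G = 5 ∨
        Nat.card G = 7 ∨ Nat.card G = 8 := by omega
      rcases h with h | h | h | h | h | h <;> rw [h]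
      · exact ⟨2, 0, by norm_num, rfl⟩
      · exact ⟨2, 1, by norm_num, rfl⟩
      · exact ⟨2, 2, by norm_num, rfl⟩
      · exact ⟨5, 1, by norm_num, rfl⟩
      · exact ⟨7, 1, by norm_num, rfl⟩
      · exact ⟨2, 3, by norm_num, rfl⟩
    obtain ⟨p, k, hp, hc⟩ := hpp
    have : Fact p.Prime := ⟨hp⟩
    exact IsPGroup.solv (IsPGroup.of_card hc)
  exfalso
  have hn : 4 ≤ Nat.card (Sylow 3 G) := by omega
  have hP : Nat.card P = 3 ∨ 9 ≤ Nat.card P := by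
    obtain ⟨m, hm⟩ := hpcard
    match m with
    | 0 =>
      exfalso
      apply hn1
      have : Subsingleton (Sylow 3 G) := by
        constructor
        have key : ∀ Q : Sylow 3 G, (Q : Subgroup G) = ⊥ := by
          intro Q
          rw [← card_eq_one]
          exact (card_sylow_eq Q P).trans hm
        intro A B
        apply Sylow.ext
        rw [key, key]
      exact Nat.card_eq_one_iff_unique.mpr ⟨this, ⟨P⟩⟩
    | 1 => left; exact hm
    | m + 2 =>
      right
      have : Nat.card P = 3 ^ (m + 2) := hm
      rw [this, pow_add]
      have := Nat.one_le_pow m 3 (by norm_num)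
      omega
  obtain ⟨ν, hν, hN, hG, h1⟩ := exists_nu P
  have hcases : ν = 1 ∨ ν = 2 ∨ 3 ≤ ν := by omega
  rcases hcases with rfl | rfl | h3
  · exact caseA_false hK hyp P hn (h1 rfl) (by rw [hG, one_mul]) hP
  · rcases hP with hP | hP
    · exact small_false hns hyp P hn hG hP
    · have hPP : IsPGroup 3 (P : Subgroup G) := P.2
      have hnt : Nontrivial (P : Subgroup G) := by
        rw [← Finite.one_lt_card_iff_nontrivial]
        have : 9 ≤ Nat.card (P : Subgroup G) := hP
        omega
      have hc : Nontrivial (center (P : Subgroup G)) := hPP.center_nontrivial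
      have hcP : IsPGroup 3 (center (P : Subgroup G)) := hPP.to_subgroup _
      have hd : 3 ∣ Nat.card (center (P : Subgroup G)) := by
        obtain ⟨m, hm, hm'⟩ := hcP.nontrivial_iff_card.mp hc
        rw [hm']; exact dvd_pow_self 3 (by omega)
      obtain ⟨c, hc3⟩ := exists_prime_orderOf_dvd_card' 3 hd
      have hz3 : orderOf ((c : (P : Subgroup G)) : G) = 3 := by
        rw [orderOf_coe, orderOf_coe, hc3]
      have hzc : ∀ p ∈ P, Commute p ((c : (P : Subgroup G)) : G) := by
        intro p hp
        have := mem_center_iff.mp c.2 ⟨p, hp⟩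
        exact congrArg Subtype.val this
      refine caseB_false (z := ((c : (P : Subgroup G)) : G)) c.1.2 hzc hz3 hG hN hn hP ?_ hyp
      by_contra hall
      push Not at hall
      have hcore : ((c : (P : Subgroup G)) : G) ∈ (P : Subgroup G).normalCore := by
        intro b
        have := hall (b⁻¹ • P)
        rw [mem_smul_iff] at this
        have h' : b * ((c : (P : Subgroup G)) : G) * b⁻¹ ∈ P := by simpa using this
        exact h'
      have hbot : (P : Subgroup G).normalCore = ⊥ :=
        hns _ inferInstance (IsPGroup.solv (P.2.to_le (normalCore_le _)))
      rw [hbot, mem_bot] at hcore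
      rw [hcore] at hz3
      simp at hz3
  · have hS : cnt (fun y : G => orderOf y = 3) + Nat.card (Sylow 3 G) ≤
        Nat.card (Sylow 3 G) * Nat.card P := by
      have hd := dc_mm P _ ord3_conj ord3_p3
      have h2 := cnt_S_le P
      calc _ ≤ Nat.card (Sylow 3 G) * cnt (fun y : G => orderOf y = 3 ∧ y ∈ P) +
            Nat.card (Sylow 3 G) := Nat.add_le_add_right hd _
        _ = Nat.card (Sylow 3 G) * (cnt (fun y : G => orderOf y = 3 ∧ y ∈ P) + 1) := by ring
        _ ≤ _ := Nat.mul_le_mul_left _ h2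
    have h2 := wsum_gam_le (G := G)
    have h7 := hyp.1
    have hG3 : 3 * (Nat.card (Sylow 3 G) * Nat.card P) ≤ Nat.card G := by
      rw [hG, mul_assoc]
      exact Nat.mul_le_mul_right _ h3
    have hp3 : 3 ≤ Nat.card P := by omega
    have := Nat.mul_le_mul hn hp3
    generalize Nat.card (Sylow 3 G) * Nat.card P = np at *
    omega

end a

theorem T2 : ∀ (n : ℕ) (G : Type _) [Group G] [Finite G], Nat.card G ≤ n → K3 G = ⊤ → Hyp G →
    Group.IsSolvable G := by
  intro n
  induction n with
  | zero =>
    intro G _ _ h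
    have : 0 < Nat.card G := Nat.card_pos
    omega
  | succ n ih =>
    intro G _ _ h hK hyp
    by_cases hex : ∃ N : Subgroup G, N.Normal ∧ Group.IsSolvable N ∧ N ≠ ⊥
    · obtain ⟨N, hN, hs, hne⟩ := hex
      have h1 : Nat.card (G ⧸ N) ≤ n := by
        have h2 := Subgroup.card_eq_card_quotient_mul_card_subgroup N
        have h3 : 1 < Nat.card N := one_lt_card_iff_ne_bot N |>.mpr hne
        have h4 : 0 < Nat.card (G ⧸ N) := Nat.card_pos
        nlinarith
      exact (Group.isSolvable_iff_subgroup_quotient N).mpr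
        ⟨hs, ih (G ⧸ N) h1 (K3_quot N hK) (hyp.quot N)⟩
    · push Not at hex
      exact T2_aux hK hyp hex

end FI


namespace FI

set_option linter.unusedSectionVars false

open Subgroup

section h
variable {H : Type*} [Group H] [Finite H]

theorem coset_solv {A : Type*} [Group A] (hc : ∀ a b : A, a * b = b * a) (hA : Nat.card A = 3)
    (f : H →* A) (hf : Function.Surjective f) (hK : f.ker ≤ K3 H) {a : A} (ha : a ≠ 1)
    (hs : 47 * Nat.card f.ker < 60 * cnt (fun y : H => orderOf y = 3 ∧ f y = a)) :
    Group.IsSolvable f.ker := by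
  classical
  obtain ⟨P⟩ : Nonempty (Sylow 3 H) := inferInstance
  have hPP : IsPGroup 3 (P : Subgroup H) := P.2
  have hind : f.ker.index = 3 := by
    rw [index_ker, MonoidHom.range_eq_top.mpr hf, card_top, hA]
  have hcardK : Nat.card f.ker * 3 = Nat.card H := by
    rw [← hind]; exact Subgroup.card_mul_index _
  obtain ⟨ν, hν, -, hH, hν1⟩ := exists_nu P
  have hd := dc P (fun y => orderOf y = 3 ∧ f y = a)
    (fun g y h => ⟨ord3_conj g y h.1, by
      rw [map_mul, map_mul, map_inv, hc (f g), mul_assoc, mul_inv_cancel, mul_one]; exact h.2⟩)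
    (fun y h => ord3_p3 y h.1)
  have hmt : cnt (fun y : H => (orderOf y = 3 ∧ f y = a) ∧ Unq P y) ≤
      cnt (fun y : H => (orderOf y = 3 ∧ f y = a) ∧ y ∈ P) := cnt_mono fun y h => ⟨h.1, h.2.1⟩
  have ht : 3 * cnt (fun y : H => (orderOf y = 3 ∧ f y = a) ∧ y ∈ P) ≤ Nat.card P := by
    by_cases hex : ∃ y : H, y ∈ P ∧ f y = a
    · obtain ⟨y0, hy0, hfy0⟩ := hex
      have h1 : f.ker.relIndex (P : Subgroup H) ∣ 3 := by
        have h0 := relIndex_dvd_index_of_normal f.ker (P : Subgroup H)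
        rwa [hind] at h0
      have h2 : f.ker.relIndex (P : Subgroup H) = 3 := by
        rcases (Nat.dvd_prime Nat.prime_three).mp h1 with h | h
        · exfalso
          rw [relIndex_eq_one] at h
          have := h hy0
          rw [MonoidHom.mem_ker, hfy0] at this
          exact ha this
        · exact h
      have h3 : Nat.card (f.ker.subgroupOf (P : Subgroup H)) * 3 = Nat.card P := by
        have h0 := Subgroup.card_mul_index (f.ker.subgroupOf (P : Subgroup H))
        change _ * f.ker.relIndex (P : Subgroup H) = _ at h0
        rwa [h2] at h0
      have h4 : cnt (fun y : H => (orderOf y = 3 ∧ f y = a) ∧ y ∈ P) ≤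
          cnt (fun y : (P : Subgroup H) => y ∈ f.ker.subgroupOf (P : Subgroup H)) := by
        refine cnt_le_inj (fun y : H => if h : y ∈ P then
          (⟨y * y0⁻¹, mul_mem h (inv_mem hy0)⟩ : (P : Subgroup H)) else 1) ?_ ?_
        · rintro y ⟨⟨-, hy⟩, hyP⟩
          simp only [hyP, dif_pos]
          rw [mem_subgroupOf, MonoidHom.mem_ker, map_mul, map_inv, hfy0, hy, mul_inv_cancel]
        · rintro b c ⟨-, hb⟩ ⟨-, hc⟩ hbc
          simp only [hb, hc, dif_pos] at hbc
          exact mul_right_cancel (congrArg Subtype.val hbc)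
      rw [cnt_sub] at h4
      omega
    · have : cnt (fun y : H => (orderOf y = 3 ∧ f y = a) ∧ y ∈ P) = 0 := by
        unfold cnt
        have : IsEmpty {y : H // (orderOf y = 3 ∧ f y = a) ∧ y ∈ P} :=
          ⟨fun y => hex ⟨y.1, y.2.2, y.2.1.2⟩⟩
        exact Nat.card_of_isEmpty
      omega
  have hn : 0 < Nat.card (Sylow 3 H) := Nat.card_pos
  have hmain : 47 * (ν * Nat.card P) < 45 *
      (3 * cnt (fun y : H => (orderOf y = 3 ∧ f y = a) ∧ Unq P y) +
        cnt (fun y : H => (orderOf y = 3 ∧ f y = a) ∧ y ∈ P)) := by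
    refine lt_of_mul_lt_mul_left (a := Nat.card (Sylow 3 H)) ?_ (Nat.zero_le _)
    calc Nat.card (Sylow 3 H) * (47 * (ν * Nat.card P)) =
          47 * (ν * Nat.card (Sylow 3 H) * Nat.card P) := by ring
      _ = 3 * (47 * Nat.card f.ker) := by rw [← hH, ← hcardK]; ring
      _ < 3 * (60 * cnt (fun y : H => orderOf y = 3 ∧ f y = a)) := by omega
      _ = 45 * (4 * cnt (fun y : H => orderOf y = 3 ∧ f y = a)) := by ring
      _ ≤ 45 * _ := Nat.mul_le_mul_left _ hd
      _ = _ := by ring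
  have hν' : ν = 1 := by
    by_contra h
    have h2 : 2 ≤ ν := by omega
    have := Nat.mul_le_mul_right (Nat.card P) h2
    omega
  subst hν'
  have hN := hν1 rfl
  rw [one_mul] at hmain
  have hm0 : 0 < cnt (fun y : H => (orderOf y = 3 ∧ f y = a) ∧ Unq P y) := by omega
  obtain ⟨y0, ⟨hy03, hfy0⟩, hu0⟩ : ∃ y : H, (orderOf y = 3 ∧ f y = a) ∧ Unq P y := by
    unfold cnt at hm0
    obtain ⟨y⟩ := (Nat.card_pos_iff.mp hm0).1
    exact ⟨y.1, y.2⟩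
  have hAb : IsPGroup 3 (Abelianization (P : Subgroup H)) := hPP.to_quotient _
  have hm : cnt (fun y : H => (orderOf y = 3 ∧ f y = a) ∧ Unq P y) ≤
      Nat.card (_root_.commutator (P : Subgroup H)) := by
    rw [← cnt_sub]
    refine cnt_le_inj (fun y : H => if h : y ∈ P then
      (⟨y, h⟩ * ⟨y0, hu0.1⟩⁻¹ : (P : Subgroup H)) else 1) ?_ ?_
    · rintro y ⟨⟨hy3, hy⟩, hyu⟩
      have hyP := hyu.1
      simp only [hyP, dif_pos]
      have e1 := transfer_unq (Abelianization.of (G := (P : Subgroup H))) hN hyu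
        (by rw [← hy3]; exact pow_orderOf_eq_one y)
      have e2 := transfer_unq (Abelianization.of (G := (P : Subgroup H))) hN hu0
        (by rw [← hy03]; exact pow_orderOf_eq_one y0)
      rw [← Abelianization.ker_of, MonoidHom.mem_ker, map_mul, map_inv, ← e1, ← e2, ← map_inv,
        ← map_mul]
      have h1 := K3_le_ker hAb (MonoidHom.transfer (Abelianization.of (G := (P : Subgroup H))))
      have h2 : y * y0⁻¹ ∈ f.ker := by
        rw [MonoidHom.mem_ker, map_mul, map_inv, hfy0, hy, mul_inv_cancel]
      exact h1 (hK h2)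
    · rintro b c ⟨-, hb⟩ ⟨-, hc⟩ hbc
      simp only [hb.1, hc.1, dif_pos] at hbc
      exact congrArg Subtype.val (mul_right_cancel hbc)
  have hp9 : Nat.card P < 9 := by
    by_contra h
    have h9 : 9 * Nat.card (_root_.commutator (P : Subgroup H)) ≤ Nat.card P :=
      nine_comm hPP (not_lt.mp h)
    omega
  have hp3 : Nat.card P = 3 := by
    obtain ⟨m, hm'⟩ := IsPGroup.iff_card.mp hPP
    have hm2 : Nat.card P = 3 ^ m := hm'
    match m with
    | 0 => rw [pow_zero] at hm2; omega
    | 1 => exact hm2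
    | m + 2 =>
      exfalso
      rw [pow_add] at hm2
      have := Nat.one_le_pow m 3 (by norm_num)
      omega
  have hkn : Nat.card f.ker = Nat.card (Sylow 3 H) := by
    rw [hH, hp3] at hcardK
    omega
  have hns : Nat.card (Sylow 3 H) ≤ cnt (fun y : H => orderOf y = 3 ∧ f y = a) := by
    rw [← cnt_true]
    choose g hg using fun Q => exists_smul P Q
    have hmem : ∀ Q, g Q * y0 * (g Q)⁻¹ ∈ Q := by
      intro Q
      have : g Q * y0 * (g Q)⁻¹ ∈ g Q • P := by
        rw [mem_smul_iff]
        have e : (g Q)⁻¹ * (g Q * y0 * (g Q)⁻¹) * g Q = y0 := by group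
        rw [e]; exact hu0.1
      rwa [hg Q] at this
    refine cnt_le_inj (fun Q : Sylow 3 H => g Q * y0 * (g Q)⁻¹) ?_ ?_
    · intro Q _
      refine ⟨ord3_conj _ _ hy03, ?_⟩
      rw [map_mul, map_mul, map_inv, hc (f (g Q)), mul_assoc, mul_inv_cancel, mul_one]; exact hfy0
    · intro Q R _ _ hQR
      have h1 := hmem Q
      have h2 := hmem R
      have h3 : orderOf (g R * y0 * (g R)⁻¹) = 3 := ord3_conj _ _ hy03
      have h4 : g R * y0 * (g R)⁻¹ ≠ 1 := by
        intro h; rw [h] at h3; simp at h3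
      rw [hQR] at h1
      exact (unq_of_card_three ((card_sylow_eq R P).trans hp3) h2 h4).2 Q h1
  have hall : cnt (fun y : H => f y = a) ≤ Nat.card f.ker := by
    rw [← cnt_sub]
    refine cnt_le_inj (fun y => y * y0⁻¹) ?_ ?_
    · intro y hy
      rw [MonoidHom.mem_ker, map_mul, map_inv, hfy0, hy, mul_inv_cancel]
    · intro b c _ _ h
      exact mul_right_cancel h
  have hsp := cnt_split (fun y : H => f y = a) (fun y => orderOf y = 3)
  have hcg : cnt (fun y : H => f y = a ∧ orderOf y = 3) =
      cnt (fun y : H => orderOf y = 3 ∧ f y = a) := cnt_congr fun y => and_comm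
  have hz : cnt (fun y : H => f y = a ∧ ¬ orderOf y = 3) = 0 := by omega
  refine solvable_of_cubes (x := y0) ?_
  intro k hk
  have h3 : orderOf (k * y0) = 3 := by
    by_contra h
    have : 0 < cnt (fun y : H => f y = a ∧ ¬ orderOf y = 3) := cnt_pos (y := k * y0)
      ⟨by rw [map_mul, MonoidHom.mem_ker.mp hk, one_mul, hfy0], h⟩
    omega
  rw [← h3]
  exact pow_orderOf_eq_one _

end h

section g
variable {G : Type*} [Group G] [Finite G]

instance K3_normal : (K3 G).Normal := by
  constructor
  intro n hn g
  have h : K3 G ≤ (K3 G).comap (MulAut.conj g).toMonoidHom := by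
    conv_lhs => unfold K3
    rw [closure_le]
    intro y hy
    apply Subgroup.subset_closure
    have : orderOf ((MulAut.conj g).toMonoidHom y) = orderOf y :=
      orderOf_injective (MulAut.conj g).toMonoidHom (MulAut.conj g).injective y
    change (orderOf ((MulAut.conj g).toMonoidHom y)).Coprime 3
    rw [this]
    exact hy
  exact h hn

theorem K3_sub (L : Subgroup G) (h : K3 G ≤ L) : K3 G ≤ (K3 L).map L.subtype := by
  conv_lhs => unfold K3
  rw [closure_le]
  intro g hg
  have hgL : g ∈ L := h (subset_closure hg)
  refine ⟨⟨g, hgL⟩, subset_closure ?_, rfl⟩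
  change (orderOf (⟨g, hgL⟩ : L)).Coprime 3
  rw [orderOf_mk]
  exact hg

theorem K3_K3 : K3 (K3 G) = ⊤ := by
  rw [eq_top_iff]
  intro y _
  obtain ⟨z, hz, hzy⟩ := K3_sub (K3 G) le_rfl y.2
  have : z = y := Subtype.ext hzy
  exact this ▸ hz

theorem three_dvd {y : G} (hy : y ∉ K3 G) : 3 ∣ orderOf y := by
  by_contra h
  exact hy (subset_closure (((Nat.Prime.coprime_iff_not_dvd Nat.prime_three).mpr h).symm))

theorem K3_quot_p : IsPGroup 3 (G ⧸ K3 G) := by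
  intro q
  obtain ⟨y, rfl⟩ := QuotientGroup.mk_surjective q
  obtain ⟨k, N, hN3, hN⟩ : ∃ k N : ℕ, ¬ 3 ∣ N ∧ orderOf y = 3 ^ k * N :=
    Nat.exists_eq_pow_mul_and_not_dvd (orderOf_pos y).ne' 3 (by norm_num)
  refine ⟨k, ?_⟩
  rw [← QuotientGroup.mk_pow, QuotientGroup.eq_one_iff]
  by_contra h
  have h1 := three_dvd h
  rw [orderOf_pow_of_dvd (by positivity) ⟨N, hN⟩, hN, Nat.mul_div_cancel_left _ (by positivity)] at h1
  exact hN3 h1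

theorem coset_bound [Fintype G] [DecidableEq (G ⧸ K3 G)] (hns : ¬ Group.IsSolvable (K3 G))
    {q : G ⧸ K3 G} (hq : q ≠ 1) :
    20 * ∑ y : G with (QuotientGroup.mk y : G ⧸ K3 G) = q, gam (orderOf y) ≤
      7 * (Nat.card (K3 G) : ℤ) := by
  classical
  obtain ⟨x, rfl⟩ := QuotientGroup.mk_surjective q
  by_contra hcon
  apply hns
  have hfc : ((Finset.univ.filter fun y : G => (QuotientGroup.mk y : G ⧸ K3 G) = x).card : ℤ) =
      Nat.card (K3 G) := by
    rw [← Fintype.card_subtype, ← Nat.card_eq_fintype_card]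
    congr 1
    apply Nat.card_congr
    refine ⟨fun y => ⟨x⁻¹ * y.1, ?_⟩, fun k => ⟨x * k.1, ?_⟩, ?_, ?_⟩
    · exact QuotientGroup.eq.mp y.2.symm
    · rw [QuotientGroup.mk_mul, (QuotientGroup.eq_one_iff _).mpr k.2, mul_one]
    · intro y; simp
    · intro y; simp
  have hb : ∑ y : G with (QuotientGroup.mk y : G ⧸ K3 G) = x, gam (orderOf y) ≤
      3 * (cnt (fun y : G => orderOf y = 3 ∧ (QuotientGroup.mk y : G ⧸ K3 G) = x) : ℤ) -
        2 * Nat.card (K3 G) := by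
    have e : (cnt (fun y : G => orderOf y = 3 ∧ (QuotientGroup.mk y : G ⧸ K3 G) = x) : ℤ) =
        ∑ y : G with (QuotientGroup.mk y : G ⧸ K3 G) = x, if orderOf y = 3 then (1 : ℤ) else 0 := by
      rw [cnt_int, Finset.sum_filter]
      refine Finset.sum_congr rfl fun y _ => ?_
      by_cases h1 : orderOf y = 3 <;> simp [h1]
    rw [e, ← hfc, Finset.mul_sum, Finset.card_eq_sum_ones]
    push_cast
    rw [Finset.mul_sum, ← Finset.sum_sub_distrib]
    refine Finset.sum_le_sum fun y hy => ?_
    have hyK : y ∉ K3 G := by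
      rw [← QuotientGroup.eq_one_iff, (Finset.mem_filter.mp hy).2]; exact hq
    have h3 := three_dvd hyK
    have hp := orderOf_pos y
    unfold gam
    generalize orderOf y = n at *
    split_ifs <;> omega
  have hs : 47 * Nat.card (K3 G) <
      60 * cnt (fun y : G => orderOf y = 3 ∧ (QuotientGroup.mk y : G ⧸ K3 G) = x) := by
    generalize cnt (fun y : G => orderOf y = 3 ∧ (QuotientGroup.mk y : G ⧸ K3 G) = x) = s at *
    omega
  have hx3 : orderOf (x : G ⧸ K3 G) = 3 := by
    have hm0 : 0 < cnt (fun y : G => orderOf y = 3 ∧ (QuotientGroup.mk y : G ⧸ K3 G) = x) := by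
      omega
    unfold cnt at hm0
    obtain ⟨y, hy3, hyx⟩ := (Nat.card_pos_iff.mp hm0).1
    have h1 : orderOf (x : G ⧸ K3 G) ∣ 3 := by
      rw [← hy3, ← hyx]; exact orderOf_map_dvd (QuotientGroup.mk' (K3 G)) y
    rcases (Nat.dvd_prime Nat.prime_three).mp h1 with h | h
    · exact absurd (orderOf_eq_one_iff.mp h) hq
    · exact h
  let Z := zpowers (x : G ⧸ K3 G)
  let H := Z.comap (QuotientGroup.mk' (K3 G))
  let f : H →* Z := (QuotientGroup.mk' (K3 G)).subgroupComap Z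
  have hf : Function.Surjective f :=
    MonoidHom.subgroupComap_surjective_of_surjective _ _ (QuotientGroup.mk'_surjective _)
  have hZ : Nat.card Z = 3 := by rw [Nat.card_zpowers, hx3]
  have hKH : K3 G ≤ H := by
    intro y hy
    change (QuotientGroup.mk y : G ⧸ K3 G) ∈ Z
    rw [(QuotientGroup.eq_one_iff y).mpr hy]
    exact one_mem _
  have hker : ∀ y : H, y ∈ f.ker ↔ (y : G) ∈ K3 G := by
    intro y
    rw [MonoidHom.mem_ker, ← QuotientGroup.eq_one_iff]
    exact Subtype.ext_iff
  have hfK : f.ker ≤ K3 H := by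
    intro y hy
    obtain ⟨z, hz, hzy⟩ := K3_sub H hKH ((hker y).mp hy)
    have : z = y := Subtype.ext hzy
    exact this ▸ hz
  let ι : K3 G →* f.ker :=
    { toFun := fun k => ⟨⟨k.1, hKH k.2⟩, (hker _).mpr k.2⟩
      map_one' := rfl
      map_mul' := fun _ _ => rfl }
  have hι : Function.Injective ι := fun a b h =>
    Subtype.ext (congrArg (fun z : f.ker => ((z : H) : G)) h)
  have hle : Nat.card f.ker ≤ Nat.card (K3 G) :=
    Nat.card_le_card_of_injective (fun k : f.ker => (⟨k.1.1, (hker _).mp k.2⟩ : K3 G))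
      (fun a b h => Subtype.ext (Subtype.ext (congrArg (fun z : K3 G => (z : G)) h)))
  let a : Z := ⟨(x : G ⧸ K3 G), mem_zpowers _⟩
  have ha : a ≠ 1 := fun h => hq (congrArg Subtype.val h)
  have hcnt : cnt (fun y : G => orderOf y = 3 ∧ (QuotientGroup.mk y : G ⧸ K3 G) = x) ≤
      cnt (fun y : H => orderOf y = 3 ∧ f y = a) := by
    have hmem : ∀ y : G, (QuotientGroup.mk y : G ⧸ K3 G) = x → y ∈ H := by
      intro y hy
      change (QuotientGroup.mk y : G ⧸ K3 G) ∈ Z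
      rw [hy]; exact mem_zpowers _
    refine cnt_le_inj (fun y : G => if h : y ∈ H then (⟨y, h⟩ : H) else 1) ?_ ?_
    · rintro y ⟨hy3, hy⟩
      simp only [hmem y hy, dif_pos]
      exact ⟨by rw [orderOf_mk]; exact hy3, Subtype.ext hy⟩
    · rintro b c ⟨-, hb⟩ ⟨-, hc⟩ hbc
      simp only [hmem b hb, hmem c hc, dif_pos] at hbc
      exact congrArg Subtype.val hbc
  have hsol : Group.IsSolvable f.ker := by
    refine coset_solv ?_ hZ f hf hfK ha (by omega)
    have hcyc : IsCyclic Z := isCyclic_of_prime_card hZ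
    exact (IsCyclic.commGroup (α := Z)).mul_comm
  exact Group.isSolvable_of_isSolvable_injective hι

theorem step1 (hns : ¬ Group.IsSolvable (K3 G)) (hyp : Hyp G) : Hyp (K3 G) := by
  classical
  have := Fintype.ofFinite G
  have := Fintype.ofFinite (G ⧸ K3 G)
  have hsum : ∀ w : ℕ → ℤ, (∀ n, 3 ∣ n → w n = gam n) →
      20 * wsum w G ≤ 20 * wsum w (K3 G) + 7 * ((Nat.card G : ℤ) - Nat.card (K3 G)) := by
    intro w hw
    have := Fintype.ofFinite (K3 G)
    have e1 : wsum w (K3 G) = ∑ y : G with (QuotientGroup.mk y : G ⧸ K3 G) = 1, w (orderOf y) := by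
      rw [wsum_eq]
      symm
      refine Finset.sum_bij' (fun y hy => (⟨y, (QuotientGroup.eq_one_iff y).mp
        (Finset.mem_filter.mp hy).2⟩ : K3 G)) (fun k _ => (k : G)) ?_ ?_ ?_ ?_ ?_
      · intro y _; exact Finset.mem_univ _
      · intro k _
        exact Finset.mem_filter.mpr ⟨Finset.mem_univ _, (QuotientGroup.eq_one_iff _).mpr k.2⟩
      · intro y _; rfl
      · intro k _; rfl
      · intro y _; rw [orderOf_mk]
    rw [wsum_eq w G, ← Finset.sum_fiberwise Finset.univ (fun y : G => (QuotientGroup.mk y : G ⧸ K3 G)),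
      ← Finset.add_sum_erase _ _ (Finset.mem_univ (1 : G ⧸ K3 G)), ← e1, mul_add]
    refine add_le_add le_rfl ?_
    rw [Finset.mul_sum]
    have h2 : ∀ q ∈ Finset.univ.erase (1 : G ⧸ K3 G),
        20 * ∑ y : G with (QuotientGroup.mk y : G ⧸ K3 G) = q, w (orderOf y) ≤
          7 * (Nat.card (K3 G) : ℤ) := by
      intro q hq
      have hq1 := Finset.ne_of_mem_erase hq
      refine le_trans (le_of_eq ?_) (coset_bound hns hq1)
      congr 1
      refine Finset.sum_congr rfl fun y hy => hw _ (three_dvd ?_)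
      rw [← QuotientGroup.eq_one_iff, (Finset.mem_filter.mp hy).2]; exact hq1
    refine (Finset.sum_le_card_nsmul _ _ _ h2).trans (le_of_eq ?_)
    rw [Finset.card_erase_of_mem (Finset.mem_univ _), Finset.card_univ, nsmul_eq_mul,
      ← Nat.card_eq_fintype_card]
    have h3 := Subgroup.card_eq_card_quotient_mul_card_subgroup (K3 G)
    have h4 : 0 < Nat.card (G ⧸ K3 G) := Nat.card_pos
    rw [h3, Nat.cast_sub h4]
    push_cast
    ring
  have hg := hsum gam (fun _ _ => rfl)
  have hff := hsum ff (fun n hn => by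
    unfold ff gam
    split_ifs <;> omega)
  have hle : (Nat.card (K3 G) : ℤ) ≤ Nat.card G := by
    exact_mod_cast Subgroup.card_le_card_group (K3 G)
  obtain ⟨h1, h2⟩ := hyp
  constructor <;> linarith

theorem solv_of_hyp (hyp : Hyp G) : Group.IsSolvable G := by
  by_contra hns
  have hK : ¬ Group.IsSolvable (K3 G) := fun h =>
    hns ((Group.isSolvable_iff_subgroup_quotient (K3 G)).mpr ⟨h, IsPGroup.solv K3_quot_p⟩)
  exact hK (T2 _ (K3 G) le_rfl K3_K3 (step1 hK hyp))

theorem hyp_of {F : Type*} [Group F] [Fintype F] (i : ℕ)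
    (hi : i = (Finset.univ.filter fun g : F => orderOf g = 2).card)
    (h2 : 99 * i ≤ 10 * Fintype.card F)
    (h : 10000 * ∑ x : F, orderOf x ≤ 34479 * Fintype.card F) : Hyp F := by
  classical
  have hi' : (i : ℤ) = ∑ x : F, if orderOf x = 2 then (1 : ℤ) else 0 := by
    rw [hi, Finset.card_filter]; push_cast; rfl
  have hc : ((Fintype.card F : ℕ) : ℤ) = ∑ x : F, (1 : ℤ) := by simp
  have hg : wsum gam F = 4 * (Fintype.card F : ℤ) - ((∑ x : F, orderOf x : ℕ) : ℤ) - 2 * i := by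
    rw [wsum_eq, hi', hc]
    push_cast
    rw [Finset.mul_sum, Finset.mul_sum, ← Finset.sum_sub_distrib, ← Finset.sum_sub_distrib]
    refine Finset.sum_congr rfl fun y _ => ?_
    have := orderOf_pos y
    unfold gam
    split_ifs <;> omega
  have hf : wsum ff F = 4 * (Fintype.card F : ℤ) - ((∑ x : F, orderOf x : ℕ) : ℤ) - i := by
    rw [wsum_eq, hi', hc]
    push_cast
    rw [Finset.mul_sum, ← Finset.sum_sub_distrib, ← Finset.sum_sub_distrib]
    refine Finset.sum_congr rfl fun y _ => ?_
    have := orderOf_pos y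
    unfold ff
    split_ifs <;> omega
  unfold Hyp
  rw [hg, hf, Nat.card_eq_fintype_card]
  generalize (∑ x : F, orderOf x) = S at *
  constructor <;> omega

end g

end FI

theorem avgOrder_gt_of_few_involutions' {G : Type*} [Group G] [Fintype G]
    (hns : ¬ IsSolvable G)
    (h : (numOrderTwo G : ℚ) ≤ (10 / 99 : ℚ) * (Fintype.card G : ℚ)) :
    34479 / 10000 < avgOrder G := by
  by_contra hcon
  apply hns
  have hpos : (0 : ℚ) < Fintype.card G := by exact_mod_cast Fintype.card_pos
  refine FI.solv_of_hyp (FI.hyp_of (numOrderTwo G) rfl ?_ ?_)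
  · have h1 : (99 : ℚ) * numOrderTwo G ≤ 10 * Fintype.card G := by linarith
    exact_mod_cast h1
  · rw [not_lt] at hcon
    unfold avgOrder at hcon
    rw [div_le_iff₀ hpos] at hcon
    have h1 : (10000 : ℚ) * ∑ x : G, (orderOf x : ℚ) ≤ 34479 * Fintype.card G := by linarith
    exact_mod_cast h1
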